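/- Let G be a graph with no odd induced cycle of length greater than 2ℓ+1 (i.e., odd hole number at most 2ℓ+1), and let (L0, …, Lk) be a levelling in G. Then there exists a levelling (M0, …, Mk) in G such that χ(G[Mk]) ≥ χ(G[Lk])/(3ℓ+3), and for all 1 ≤ i ≤ k − max(2, ℓ), any two adjacent vertices of Mi have the same set of neighbours in M(i−1). -/

import Mathlib

open SimpleGraph

universe u

variable {V : Type u}

/-- The independence (stability) number of a graph. -/
noncomputable def indepNum (G : SimpleGraph V) : ℕ :=
  sSup {n | ∃ s : Finset V, s.card = n ∧ ∀ x ∈ s, ∀ y ∈ s, x ≠ y → ¬ G.Adj x y}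

/-- A walk is induced: any edge of `G` between vertices of the walk is an edge of the walk. -/
def IsInducedWalk (G : SimpleGraph V) {u v : V} (p : G.Walk u v) : Prop :=
  ∀ x ∈ p.support, ∀ y ∈ p.support, G.Adj x y → p.toSubgraph.Adj x y

/-- An induced path. -/
def IsInducedPath (G : SimpleGraph V) {u v : V} (p : G.Walk u v) : Prop :=
  p.IsPath ∧ IsInducedWalk G p

/-- An odd hole: an induced cycle of odd length at least 5. -/
def HasOddHole (G : SimpleGraph V) : Prop :=
  ∃ (v : V) (p : G.Walk v v), p.IsCycle ∧ IsInducedWalk G p ∧ Odd p.length ∧ 5 ≤ p.length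

/-- A cograph: no induced path on four vertices. -/
def IsCograph (G : SimpleGraph V) : Prop :=
  ¬ ∃ a b c d : V, a ≠ c ∧ a ≠ d ∧ b ≠ d ∧
    G.Adj a b ∧ G.Adj b c ∧ G.Adj c d ∧ ¬ G.Adj a c ∧ ¬ G.Adj a d ∧ ¬ G.Adj b d

/-- A levelling `(L 0, …, L k)` in `G`. -/
def IsLevelling (G : SimpleGraph V) (k : ℕ) (L : ℕ → Set V) : Prop :=
  (∀ i j, i ≤ k → j ≤ k → i ≠ j → Disjoint (L i) (L j)) ∧
  (∃ x, L 0 = {x}) ∧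
  (∀ i, 1 ≤ i → i ≤ k → ∀ v ∈ L i,
     (∃ u ∈ L (i - 1), G.Adj u v) ∧ (∀ h, h + 1 < i → ∀ u ∈ L h, ¬ G.Adj u v))

/-- The interior (internal vertices) of a walk is contained in `S`. -/
def InteriorIn (G : SimpleGraph V) {u v : V} (p : G.Walk u v) (S : Set V) : Prop :=
  ∀ x ∈ p.support, x ≠ u → x ≠ v → x ∈ S

/-- The union `L 0 ∪ ⋯ ∪ L (k-1)`. -/
def lowerLevels (L : ℕ → Set V) (k : ℕ) : Set V := ⋃ i ∈ Finset.range k, L i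

/-- There is an odd induced path between `u` and `v` with interior in the lower levels. -/
def OddConn (G : SimpleGraph V) (L : ℕ → Set V) (k : ℕ) (u v : V) : Prop :=
  u ≠ v ∧ ∃ p : G.Walk u v, IsInducedPath G p ∧ Odd p.length ∧
    InteriorIn G p (lowerLevels L k)

/-- `w ∈ L (i+1)` is a dependent of `u ∈ L i`: `u` is its only parent. -/
def IsDependent (G : SimpleGraph V) (L : ℕ → Set V) (i : ℕ) (u w : V) : Prop :=
  w ∈ L (i + 1) ∧ G.Adj u w ∧ ∀ x ∈ L i, G.Adj x w → x = u

/-!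
Shrinking the levels so that every vertex has a dependent in the next level gives a *spine*
`c 0, …, c k`, in which each vertex is the only parent of the next one. A path going down from the
root leaves the spine, and `L k` splits according to where and how the last departure happens. For
vertices which leave at level `k - l` or later, the levels above the departure can be shrunk to
singletons. The others hang from the spine at a vertex of some level `j` adjacent to `c (j - 1)`
only, to `c j` only, or to both, and in the last case they are split once more by the residue of `j`
modulo `l + 1`. Each class is again the last level of a levelling, made from the class and a shifted
spine.

If `L k` is connected, then two induced paths with the same ends in `L (k - 1)`, with interior in
lower levels and of length at least `2 * l`, close through `L k` to induced cycles of length greater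
than `2 * l + 1`, so their lengths have the same parity. In each class, an edge inside a level
joining vertices with different parents would give two such paths of different parity.
-/

section InducedPaths

/-- `IsInducedPathOn G S u v n`: the set `S` is the vertex set of an induced path of `G` from `u`
to `v` with `n` edges. This form is convenient for building paths; `exists_walk` converts it to a
walk. -/
inductive IsInducedPathOn (G : SimpleGraph V) : Set V → V → V → ℕ → Prop
  | single (v : V) : IsInducedPathOn G {v} v v 0
  | cons {S : Set V} {u v w : V} {n : ℕ} (hS : IsInducedPathOn G S v w n) (huv : G.Adj u v)
      (hu : u ∉ S) (hadj : ∀ x ∈ S, G.Adj u x → x = v) :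
      IsInducedPathOn G (insert u S) u w (n + 1)

/-- The sets `S` and `T` are disjoint and no edge joins them. -/
def IsAnticomplete (G : SimpleGraph V) (S T : Set V) : Prop :=
  ∀ x ∈ S, ∀ y ∈ T, x ≠ y ∧ ¬ G.Adj x y

/-- The sets `S` and `T` are disjoint and `v v'`, with `v` on the side of `S`, is the only edge
between them: the situation in which induced paths on `S` and `T` can be concatenated. -/
structure IsJoin (G : SimpleGraph V) (S T : Set V) (v v' : V) : Prop where
  adj : G.Adj v v'
  ne : ∀ x ∈ S, ∀ y ∈ T, x ≠ y
  eq_of_adj : ∀ x ∈ S, ∀ y ∈ T, G.Adj x y → x = v ∧ y = v'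

variable {G : SimpleGraph V} {S S' T C : Set V} {u v u' v' w x : V} {n m : ℕ}

theorem IsAnticomplete.symm (h : IsAnticomplete G S T) : IsAnticomplete G T S :=
  fun x hx y hy => ⟨(h y hy x hx).1.symm, fun hxy => (h y hy x hx).2 hxy.symm⟩

namespace IsJoin

theorem symm (h : IsJoin G S T v v') : IsJoin G T S v' v :=
  ⟨h.adj.symm, fun x hx y hy => (h.ne y hy x hx).symm,
    fun x hx y hy hxy => (h.eq_of_adj y hy x hx hxy.symm).symm⟩

theorem mono_left (h : IsJoin G S T v v') (hS : S' ⊆ S) : IsJoin G S' T v v' :=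
  ⟨h.adj, fun x hx => h.ne x (hS hx), fun x hx => h.eq_of_adj x (hS hx)⟩

theorem union_left (h : IsJoin G S T v v') (h' : IsAnticomplete G S' T) :
    IsJoin G (S' ∪ S) T v v' :=
  ⟨h.adj, fun x hx y hy => hx.elim (fun hx => (h' x hx y hy).1) (fun hx => h.ne x hx y hy),
    fun x hx y hy hxy => hx.elim (fun hx => absurd hxy (h' x hx y hy).2)
      (fun hx => h.eq_of_adj x hx y hy hxy)⟩

end IsJoin

namespace IsInducedPathOn

theorem left_mem (h : IsInducedPathOn G S u v n) : u ∈ S := by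
  cases h <;> simp

theorem right_mem (h : IsInducedPathOn G S u v n) : v ∈ S := by
  induction h with
  | single => rfl
  | cons _ _ _ _ ih => exact Or.inr ih

theorem ne (h : IsInducedPathOn G S u v n) (hn : 1 ≤ n) : u ≠ v := by
  cases h with
  | single => omega
  | cons hS _ hu _ => exact fun e => hu (e ▸ hS.right_mem)

theorem append (hS : IsInducedPathOn G S u v n) (hT : IsInducedPathOn G T v' w m)
    (h : IsJoin G S T v v') : IsInducedPathOn G (S ∪ T) u w (n + 1 + m) := by
  induction hS with
  | single a =>
    rw [← Set.insert_eq, Nat.zero_add, Nat.add_comm]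
    exact hT.cons h.adj (fun ha => h.ne a rfl a ha rfl)
      fun x hx hax => (h.eq_of_adj a rfl x hx hax).2
  | @cons S a b c n hS hab ha hadj ih =>
    rw [Set.insert_union, Nat.add_right_comm n 1 1, Nat.add_right_comm (n + 1) 1 m]
    refine (ih (h.mono_left (Set.subset_insert a S))).cons hab ?_ ?_
    · exact fun hx => hx.elim ha fun hx => h.ne a (Or.inl rfl) a hx rfl
    · rintro x (hx | hx) hax
      · exact hadj x hx hax
      · exact absurd ((h.eq_of_adj a (Or.inl rfl) x hx hax).1 ▸ hS.right_mem) ha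

theorem symm (h : IsInducedPathOn G S u v n) : IsInducedPathOn G S v u n := by
  induction h with
  | single a => exact single a
  | @cons S a b c n _ hab ha hadj ih =>
    rw [← Set.union_singleton]
    refine ih.append (single a) ⟨hab.symm, ?_, ?_⟩
    · exact fun x hx y hy hxy => ha ((hxy.trans hy) ▸ hx)
    · rintro x hx y rfl hxy
      exact ⟨hadj x hx hxy.symm, rfl⟩

theorem exists_walk (h : IsInducedPathOn G S u v n) :
    ∃ p : G.Walk u v, IsInducedPath G p ∧ p.length = n ∧ ∀ x, x ∈ p.support ↔ x ∈ S := by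
  induction h with
  | single a => exact ⟨Walk.nil, ⟨by simp, by simp [IsInducedWalk]⟩, rfl, by simp⟩
  | @cons S a b c n _ hab ha hadj ih =>
    obtain ⟨p, ⟨hp, hi⟩, hl, hs⟩ := ih
    refine ⟨Walk.cons hab p, ⟨?_, ?_⟩, by simp [hl], by simp [hs]⟩
    · rw [Walk.cons_isPath_iff, hs]
      exact ⟨hp, ha⟩
    · intro x hx y hy hxy
      simp only [Walk.support_cons, List.mem_cons, hs] at hx hy
      simp only [Walk.toSubgraph, Subgraph.sup_adj, subgraphOfAdj_adj]
      rcases hx with rfl | hx <;> rcases hy with rfl | hy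
      · exact absurd hxy G.irrefl
      · exact Or.inl (by rw [hadj y hy hxy])
      · exact Or.inl (by rw [hadj x hx hxy.symm, Sym2.eq_swap])
      · exact Or.inr (hi x ((hs x).2 hx) y ((hs y).2 hy) hxy)

theorem exists_cycle_of_vertex (h : IsInducedPathOn G S u v n) (hn : 1 ≤ n) (hx : x ∉ S)
    (hxu : G.Adj x u) (hxv : G.Adj x v) (hadj : ∀ y ∈ S, G.Adj x y → y = u ∨ y = v) :
    ∃ p : G.Walk x x, p.IsCycle ∧ IsInducedWalk G p ∧ p.length = n + 2 := by
  obtain ⟨p, ⟨hp, hi⟩, hl, hs⟩ := h.exists_walk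
  refine ⟨Walk.cons hxu (p.concat hxv.symm), ?_, ?_, by simp [hl]⟩
  · rw [Walk.cons_isCycle_iff, Walk.concat_isPath_iff, hs]
    refine ⟨⟨hp, hx⟩, ?_⟩
    simp only [Walk.edges_concat, List.concat_eq_append, List.mem_append, List.mem_singleton]
    rintro (hmem | heq)
    · exact hx ((hs x).1 (p.fst_mem_support_of_mem_edges hmem))
    · rw [Sym2.eq_swap, Sym2.eq_iff] at heq
      exact heq.elim (fun e => h.ne hn e.1) fun e => hx (e.1 ▸ h.left_mem)
  · intro a ha b hb hab
    have mem_or : ∀ y ∈ (Walk.cons hxu (p.concat hxv.symm)).support, y = x ∨ y ∈ S := by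
      simp [Walk.support_concat, hs]
      tauto
    simp only [Walk.concat_eq_append, Walk.toSubgraph, Walk.toSubgraph_append, Subgraph.sup_adj,
      subgraphOfAdj_adj, singletonSubgraph_adj]
    rcases mem_or a ha with rfl | haS <;> rcases mem_or b hb with rfl | hbS
    · exact absurd hab G.irrefl
    · rcases hadj b hbS hab with rfl | rfl
      · exact Or.inl rfl
      · exact Or.inr (Or.inr (Or.inl Sym2.eq_swap))
    · rcases hadj a haS hab.symm with rfl | rfl
      · exact Or.inl Sym2.eq_swap
      · exact Or.inr (Or.inr (Or.inl rfl))
    · exact Or.inr (Or.inl (hi a ((hs a).2 haS) b ((hs b).2 hbS) hab))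

theorem exists_cycle (hS : IsInducedPathOn G S u v n) (hT : IsInducedPathOn G T u' v' m)
    (hn : 1 ≤ n) (hu : G.Adj u' u) (hv : G.Adj v' v) (hne : ∀ x ∈ S, ∀ y ∈ T, x ≠ y)
    (hadj : ∀ x ∈ S, ∀ y ∈ T, G.Adj y x → x = u ∧ y = u' ∨ x = v ∧ y = v') :
    ∃ (x : V) (p : G.Walk x x), p.IsCycle ∧ IsInducedWalk G p ∧ p.length = n + m + 2 := by
  cases hT with
  | single a =>
    obtain ⟨p, hp⟩ := hS.exists_cycle_of_vertex hn (fun h => hne _ h _ rfl rfl) hu hv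
      (fun y hy h => (hadj y hy _ rfl h).imp And.left And.left)
    exact ⟨_, p, hp⟩
  | @cons T' _ b _ m hT hub hu' hadj' =>
    have hST : IsJoin G S T' v v' := by
      refine ⟨hv.symm, fun x hx y hy => hne x hx y (Or.inr hy), fun x hx y hy hxy => ?_⟩
      exact (hadj x hx y (Or.inr hy) hxy.symm).resolve_left fun h => hu' (h.2 ▸ hy)
    obtain ⟨p, hp, hi, hl⟩ := (hS.append hT.symm hST).exists_cycle_of_vertex (x := u')
      (by omega) (fun h => h.elim (fun h => hne _ h _ (Or.inl rfl) rfl) hu') hu hub (by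
        rintro y (hy | hy) hy'
        · rcases hadj y hy u' (Or.inl rfl) hy' with h | h
          · exact Or.inl h.1
          · exact absurd (h.2 ▸ hT.right_mem) hu'
        · exact Or.inr (hadj' y hy hy'))
    exact ⟨_, p, hp, hi, by omega⟩

theorem exists_suffix (h : IsInducedPathOn G S u v n) (hx : x ∈ S) :
    ∃ T ⊆ S, ∃ m ≤ n, IsInducedPathOn G T x v m ∧ (x ≠ u → m < n) := by
  induction h with
  | single a =>
    obtain rfl : x = a := hx
    exact ⟨{x}, subset_rfl, 0, le_rfl, single x, fun h => (h rfl).elim⟩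
  | @cons S a b c n hS hab ha hadj ih =>
    rcases hx with rfl | hx
    · exact ⟨_, subset_rfl, _, le_rfl, cons hS hab ha hadj, fun h => (h rfl).elim⟩
    · obtain ⟨T, hT, m, hm, hpath, -⟩ := ih hx
      exact ⟨T, hT.trans (Set.subset_insert _ _), m, by omega, hpath, fun _ => by omega⟩

theorem exists_extend (h : IsInducedPathOn G S v w n) (hx : x ∈ S) (hux : G.Adj u x) :
    ∃ T ⊆ insert u S, ∃ m, IsInducedPathOn G T u w m := by
  induction h generalizing x with
  | single a =>
    obtain rfl : x = a := hx
    exact ⟨_, subset_rfl, _, cons (single x) hux hux.ne fun y hy _ => hy⟩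
  | @cons S a b c n hS hab ha hadj ih =>
    by_cases h : ∃ y ∈ S, G.Adj u y
    · obtain ⟨y, hy, huy⟩ := h
      obtain ⟨T, hT, m, hpath⟩ := ih hy huy
      exact ⟨T, hT.trans (Set.insert_subset_insert (Set.subset_insert _ _)), m, hpath⟩
    · push Not at h
      obtain rfl : x = a := hx.resolve_right fun hx => h x hx hux
      by_cases hu : u ∈ S
      · obtain ⟨T, hT, m, -, hpath, -⟩ := hS.exists_suffix hu
        exact ⟨T, fun z hz => Or.inr (Or.inr (hT hz)), m, hpath⟩
      · refine ⟨_, subset_rfl, _, cons (cons hS hab ha hadj) hux ?_ ?_⟩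
        · exact fun hu' => hu'.elim hux.ne hu
        · exact fun y hy huy => hy.resolve_right fun hy => h y hy huy

theorem exists_of_walk {a b : C} (p : (G.induce C).Walk a b) :
    ∃ T ⊆ C, ∃ m, IsInducedPathOn G T a b m := by
  induction p with
  | nil => exact ⟨_, by simp, 0, single _⟩
  | @cons a b c h _ ih =>
    obtain ⟨T, hT, m, hp⟩ := ih
    have hab : G.Adj (a : V) b := h
    obtain ⟨T', hT', m', hp'⟩ := hp.exists_extend hp.left_mem hab
    exact ⟨T', hT'.trans (Set.insert_subset a.2 hT), m', hp'⟩

theorem exists_between (hC : (G.induce C).Preconnected) (hu : ∃ x ∈ C, G.Adj u x)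
    (hv : ∃ x ∈ C, G.Adj v x) :
    ∃ T ⊆ C, ∃ p q m, IsInducedPathOn G T p q m ∧ G.Adj u p ∧ G.Adj v q ∧
      (∀ z ∈ T, G.Adj u z → z = p) ∧ ∀ z ∈ T, G.Adj v z → z = q := by
  have hex : ∃ m, ∃ T ⊆ C, ∃ p q, IsInducedPathOn G T p q m ∧ G.Adj u p ∧ G.Adj v q := by
    obtain ⟨a, ha, hua⟩ := hu
    obtain ⟨b, hb, hvb⟩ := hv
    obtain ⟨p⟩ := hC ⟨a, ha⟩ ⟨b, hb⟩
    obtain ⟨T, hT, m, hp⟩ := exists_of_walk p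
    exact ⟨m, T, hT, a, b, hp, hua, hvb⟩
  classical
  obtain ⟨T, hT, p, q, hp, hup, hvq⟩ := Nat.find_spec hex
  have hmin := fun m => Nat.find_min hex (m := m)
  refine ⟨T, hT, p, q, _, hp, hup, hvq, fun z hz huz => ?_, fun z hz hvz => ?_⟩
  · by_contra hne
    obtain ⟨T', hT', m, -, hp', hlt⟩ := hp.exists_suffix hz
    exact hmin m (hlt hne) ⟨T', hT'.trans hT, z, q, hp', huz, hvq⟩
  · by_contra hne
    obtain ⟨T', hT', m, -, hp', hlt⟩ := hp.symm.exists_suffix hz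
    exact hmin m (hlt hne) ⟨T', hT'.trans hT, p, z, hp'.symm, hup, hvz⟩

end IsInducedPathOn

/-- Every induced odd cycle of `G` has length at most `2 * l + 1`. -/
def OddHolesLE (G : SimpleGraph V) (l : ℕ) : Prop :=
  ∀ (v : V) (p : G.Walk v v), p.IsCycle → IsInducedWalk G p → Odd p.length → p.length ≤ 2 * l + 1

theorem OddHolesLE.not_odd {l : ℕ} (hG : OddHolesLE G l) (hS : IsInducedPathOn G S u v n)
    (hT : IsInducedPathOn G T u' v' m) (hn : 1 ≤ n) (hu : G.Adj u' u) (hv : G.Adj v' v)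
    (hne : ∀ x ∈ S, ∀ y ∈ T, x ≠ y)
    (hadj : ∀ x ∈ S, ∀ y ∈ T, G.Adj y x → x = u ∧ y = u' ∨ x = v ∧ y = v')
    (hlen : 2 * l ≤ n + m) : ¬ Odd (n + m) := by
  intro hodd
  obtain ⟨x, p, hp, hi, hl⟩ := hS.exists_cycle hT hn hu hv hne hadj
  have := hG x p hp hi (hl ▸ hodd.add_even even_two)
  omega

end InducedPaths

section Levellings

variable {G : SimpleGraph V} {L E F : ℕ → Set V} {x y : ℕ → V} {u v a : V} {S T : Set V}
  {i j k l m n p q p' q' : ℕ}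

theorem mem_lowerLevels : v ∈ lowerLevels L k ↔ ∃ j < k, v ∈ L j := by
  simp [lowerLevels]

namespace IsLevelling

theorem index_eq (hL : IsLevelling G k L) (hi : i ≤ k) (hj : j ≤ k) (hvi : v ∈ L i)
    (hvj : v ∈ L j) : i = j := by
  by_contra hij
  exact Set.disjoint_left.1 (hL.1 i j hi hj hij) hvi hvj

theorem le_succ (hL : IsLevelling G k L) (hj : j ≤ k) (hu : u ∈ L i) (hv : v ∈ L j)
    (huv : G.Adj u v) : j ≤ i + 1 := by
  by_contra hij
  exact (hL.2.2 j (by omega) hj v hv).2 i (by omega) u hu huv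

theorem adj_cases (hL : IsLevelling G k L) (hi : i ≤ k) (hj : j ≤ k) (hu : u ∈ L i) (hv : v ∈ L j)
    (huv : G.Adj u v) : i = j ∨ j = i + 1 ∨ i = j + 1 := by
  have hij := hL.le_succ hj hu hv huv
  have hji := hL.le_succ hi hv hu huv.symm
  omega

theorem exists_parent (hL : IsLevelling G k L) (hj : j + 1 ≤ k) (hv : v ∈ L (j + 1)) :
    ∃ u ∈ L j, G.Adj u v :=
  (hL.2.2 (j + 1) (by omega) hj v hv).1

theorem of_lt (hdisj : ∀ i j, i < j → j ≤ k → ∀ v ∈ E i, v ∉ E j) (h0 : ∃ v, E 0 = {v})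
    (hpar : ∀ j < k, ∀ v ∈ E (j + 1), ∃ u ∈ E j, G.Adj u v)
    (hskip : ∀ i j, i + 1 < j → j ≤ k → ∀ u ∈ E i, ∀ v ∈ E j, ¬ G.Adj u v) :
    IsLevelling G k E := by
  refine ⟨fun i j hi hj hij => ?_, h0, ?_⟩
  · rcases hij.lt_or_gt with hij | hij
    · exact Set.disjoint_left.2 (hdisj i j hij hj)
    · exact Set.disjoint_right.2 (hdisj j i hij hi)
  · rintro (_ | j) hj hjk v hv
    · omega
    · exact ⟨hpar j hjk v hv, fun i hij u hu => hskip i (j + 1) hij hjk u hu v hv⟩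

theorem of_subset (hL : IsLevelling G k L) (hE : ∀ j ≤ k, E j ⊆ L j) (h0 : ∃ v, E 0 = {v})
    (hpar : ∀ j < k, ∀ v ∈ E (j + 1), ∃ u ∈ E j, G.Adj u v) : IsLevelling G k E := by
  refine .of_lt (fun i j hij hj v hvi hvj => ?_) h0 hpar fun i j hij hj u hu v hv huv => ?_
  · exact hij.ne (hL.index_eq (by omega) hj (hE i (by omega) hvi) (hE j hj hvj))
  · have := hL.le_succ hj (hE i (by omega) hu) (hE j hj hv) huv
    omega

end IsLevelling

/-- The vertices `x p, …, x q` form a path meeting the levels `E p, …, E q` in order. -/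
structure IsVerticalPath (G : SimpleGraph V) (E : ℕ → Set V) (x : ℕ → V) (p q : ℕ) : Prop where
  mem : ∀ j, p ≤ j → j ≤ q → x j ∈ E j
  adj : ∀ j, p ≤ j → j < q → G.Adj (x j) (x (j + 1))

namespace IsVerticalPath

theorem mono (h : IsVerticalPath G E x p q) (hp : p ≤ p') (hq : q' ≤ q) :
    IsVerticalPath G E x p' q' :=
  ⟨fun j hpj hjq => h.mem j (hp.trans hpj) (hjq.trans hq),
    fun j hpj hjq => h.adj j (hp.trans hpj) (hjq.trans_le hq)⟩

theorem of_subset (h : IsVerticalPath G E x p q) (hE : ∀ j ≤ q, E j ⊆ L j) :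
    IsVerticalPath G L x p q :=
  ⟨fun j hpj hjq => hE j hjq (h.mem j hpj hjq), h.adj⟩

theorem single (h : x p ∈ E p) : IsVerticalPath G E x p p :=
  ⟨fun j hpj hjp => by rwa [show j = p by omega], fun j _ _ => by omega⟩

theorem cons (h : IsVerticalPath G E x (p + 1) q) (hu : u ∈ E p) (hux : G.Adj u (x (p + 1))) :
    IsVerticalPath G E (Function.update x p u) p q := by
  refine ⟨fun j hpj hjq => ?_, fun j hpj hjq => ?_⟩ <;> rcases hpj.eq_or_lt with rfl | hpj
  · simpa using hu
  · simpa [hpj.ne'] using h.mem j hpj hjq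
  · simpa using hux
  · simpa [hpj.ne', (show j + 1 ≠ p by omega)] using h.adj j hpj hjq

theorem isInducedPathOn (h : IsVerticalPath G L x p q) (hL : IsLevelling G k L) (hpq : p ≤ q)
    (hq : q ≤ k) : IsInducedPathOn G (x '' Set.Icc p q) (x p) (x q) (q - p) := by
  induction hpq using Nat.decreasingInduction with
  | self => simpa using IsInducedPathOn.single (G := G) (x q)
  | of_succ r hr ih =>
    have hr_mem := h.mem r le_rfl hr.le
    have hpath := (ih (h.mono (Nat.le_succ r) le_rfl)).cons (h.adj r le_rfl hr) (by
      rintro ⟨j, ⟨hrj, hjq⟩, hj⟩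
      have := hL.index_eq (by omega) (by omega) (h.mem j (by omega) hjq) (hj ▸ hr_mem)
      omega) (by
      rintro _ ⟨j, ⟨hrj, hjq⟩, rfl⟩ hadj
      have := hL.le_succ (by omega) hr_mem (h.mem j (by omega) hjq) hadj
      rw [show j = r + 1 by omega])
    rw [← Set.image_insert_eq, show q - (r + 1) + 1 = q - r by omega] at hpath
    convert hpath using 2
    ext j
    simp only [Set.mem_Icc, Set.mem_insert_iff]
    omega

theorem image_subset_lowerLevels (h : IsVerticalPath G L x p q) (hqn : q < n) :
    x '' Set.Icc p q ⊆ lowerLevels L n := by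
  rintro _ ⟨j, ⟨hpj, hjq⟩, rfl⟩
  exact mem_lowerLevels.2 ⟨j, by omega, h.mem j hpj hjq⟩

theorem image_subset_insert_lowerLevels (h : IsVerticalPath G L x p q) :
    x '' Set.Icc p q ⊆ insert (x q) (lowerLevels L q) := by
  rintro _ ⟨j, ⟨hpj, hjq⟩, rfl⟩
  rcases hjq.eq_or_lt with rfl | hjq
  · exact Or.inl rfl
  · exact Or.inr (mem_lowerLevels.2 ⟨j, hjq, h.mem j hpj hjq.le⟩)

theorem ne_and_eq_of_adj (hx : IsVerticalPath G L x p q) (hy : IsVerticalPath G L y p' q')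
    (hL : IsLevelling G k L) (hq : q ≤ k) (hq' : q' ≤ k)
    (hne : ∀ j, p ≤ j → j ≤ q → p' ≤ j → j ≤ q' → x j ≠ y j)
    (hxy : ∀ j, p ≤ j → j ≤ q → p' ≤ j + 1 → j + 1 ≤ q' → ¬ G.Adj (x j) (y (j + 1)))
    (hyx : ∀ j, p' ≤ j → j ≤ q' → p ≤ j + 1 → j + 1 ≤ q → ¬ G.Adj (y j) (x (j + 1)))
    (hpi : p ≤ i) (hiq : i ≤ q) (hpj : p' ≤ j) (hjq : j ≤ q') :
    x i ≠ y j ∧ (G.Adj (x i) (y j) → i = j) := by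
  have hi := hx.mem i hpi hiq
  have hj := hy.mem j hpj hjq
  constructor
  · intro heq
    obtain rfl := hL.index_eq (by omega) (by omega) hi (heq ▸ hj)
    exact hne i hpi hiq hpj hjq heq
  · intro hadj
    rcases hL.adj_cases (by omega) (by omega) hi hj hadj with hij | rfl | rfl
    · exact hij
    · exact absurd hadj (hxy i hpi hiq hpj hjq)
    · exact absurd hadj.symm (hyx j hpj hjq hpi hiq)

theorem isJoin_horizontal (hx : IsVerticalPath G L x p i) (hy : IsVerticalPath G L y i q)
    (hL : IsLevelling G k L) (hpi : p ≤ i) (hiq : i ≤ q) (hq : q ≤ k) (hadj : G.Adj (x i) (y i))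
    (hdown : p < i → ¬ G.Adj (x (i - 1)) (y i)) (hup : i < q → ¬ G.Adj (x i) (y (i + 1))) :
    IsJoin G (x '' Set.Icc p i) (y '' Set.Icc i q) (x i) (y i) := by
  refine ⟨hadj, ?_, ?_⟩ <;> rintro _ ⟨h, ⟨hph, hhi⟩, rfl⟩ _ ⟨j, ⟨hij, hjq⟩, rfl⟩ hxy
  · have := hL.index_eq (by omega) (by omega) (hx.mem h hph hhi) (hxy ▸ hy.mem j hij hjq)
    obtain rfl : h = i := by omega
    obtain rfl : j = h := by omega
    exact hadj.ne hxy
  · have := hL.le_succ (by omega) (hx.mem h hph hhi) (hy.mem j hij hjq) hxy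
    rcases hhi.eq_or_lt with rfl | hhi
    · rcases hij.eq_or_lt with rfl | hhj
      · exact ⟨rfl, rfl⟩
      · obtain rfl : j = h + 1 := by omega
        exact absurd hxy (hup hjq)
    · obtain rfl : j = i := by omega
      obtain rfl : h = j - 1 := by omega
      exact absurd hxy (hdown (by omega))

end IsVerticalPath

/-- A vertical path in the levels `E p, …, E q` in which every vertex is a dependent of the
preceding one. -/
structure IsDependentChain (G : SimpleGraph V) (E : ℕ → Set V) (x : ℕ → V) (p q : ℕ) : Prop where
  mem : x p ∈ E p
  dep : ∀ j, p ≤ j → j < q → IsDependent G E j (x j) (x (j + 1))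

namespace IsDependentChain

theorem isVerticalPath (h : IsDependentChain G E x p q) : IsVerticalPath G E x p q := by
  refine ⟨fun j hpj hjq => ?_, fun j hpj hjq => (h.dep j hpj hjq).2.1⟩
  rcases hpj.eq_or_lt with rfl | hpj
  · exact h.mem
  · obtain ⟨j, rfl⟩ : ∃ i, j = i + 1 := ⟨j - 1, by omega⟩
    exact (h.dep j (by omega) hjq).1

theorem congr (h : IsDependentChain G E x p q) (hxy : ∀ j, p ≤ j → y j = x j) :
    IsDependentChain G E y p q :=
  ⟨hxy p le_rfl ▸ h.mem,
    fun j hpj hjq => hxy j hpj ▸ hxy (j + 1) (by omega) ▸ h.dep j hpj hjq⟩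

theorem not_adj_succ (h : IsDependentChain G E x p q) (hp : p ≤ j) (hq : j < q) (ha : a ∈ E j)
    (hne : a ≠ x j) : ¬ G.Adj a (x (j + 1)) :=
  fun hadj => hne ((h.dep j hp hq).2.2 a ha hadj)

theorem ne (hy : IsDependentChain G E y p q) (hx : IsVerticalPath G E x p q) (hp : x p ≠ y p)
    (hpj : p ≤ j) (hjq : j ≤ q) : x j ≠ y j := by
  induction j, hpj using Nat.le_induction with
  | base => exact hp
  | succ j hpj ih =>
    intro heq
    exact hy.not_adj_succ hpj hjq (hx.mem j hpj (by omega)) (ih (by omega))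
      (heq ▸ hx.adj j hpj hjq)

end IsDependentChain

theorem exists_dependentChain {att : ℕ → V → Prop}
    (hdep : ∀ j < k, ∀ u ∈ E j, ∃ w, IsDependent G E j u w ∧ ¬ att (j + 1) w)
    (hj : j ≤ k) (hu : u ∈ E j) :
    ∃ x, IsDependentChain G E x j k ∧ x j = u ∧ ∀ h, j < h → h ≤ k → ¬ att h (x h) := by
  induction hj using Nat.decreasingInduction generalizing u with
  | self => exact ⟨fun _ => u, ⟨hu, fun h _ _ => by omega⟩, rfl, fun h _ _ => by omega⟩
  | of_succ j hj ih =>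
    obtain ⟨w, huw, hw⟩ := hdep j hj u hu
    obtain ⟨x, hx, rfl, hxa⟩ := ih huw.1
    refine ⟨Function.update x j u, ⟨by simpa using hu, fun h hjh hhk => ?_⟩, by simp,
      fun h hjh hhk => ?_⟩
    · rcases hjh.eq_or_lt with rfl | hjh
      · simpa using huw
      · simpa [hjh.ne', (show h + 1 ≠ j by omega)] using hx.dep h hjh hhk
    · rw [Function.update_of_ne hjh.ne']
      rcases (Nat.succ_le_of_lt hjh).eq_or_lt with rfl | hjh
      · exact hw
      · exact hxa h hjh hhk

theorem exists_minimal_cover [Finite V] {X W : Set V} (h : ∀ w ∈ W, ∃ u ∈ X, G.Adj u w) :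
    ∃ Y ⊆ X, (∀ w ∈ W, ∃ u ∈ Y, G.Adj u w) ∧
      ∀ u ∈ Y, ∃ w ∈ W, G.Adj u w ∧ ∀ u' ∈ Y, G.Adj u' w → u' = u := by
  obtain ⟨Y, -, hY⟩ := (Set.toFinite {Y | Y ⊆ X ∧ ∀ w ∈ W, ∃ u ∈ Y, G.Adj u w}).exists_le_minimal
    (a := X) ⟨subset_rfl, h⟩
  refine ⟨Y, hY.prop.1, hY.prop.2, fun u hu => ?_⟩
  by_contra! hc
  have hcover : Y \ {u} ⊆ X ∧ ∀ w ∈ W, ∃ u' ∈ Y \ {u}, G.Adj u' w := by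
    refine ⟨Set.sdiff_subset.trans hY.prop.1, fun w hw => ?_⟩
    by_cases huw : G.Adj u w
    · obtain ⟨u', hu', hadj, hne⟩ := hc w hw huw
      exact ⟨u', ⟨hu', hne⟩, hadj⟩
    · obtain ⟨u', hu', hadj⟩ := hY.prop.2 w hw
      exact ⟨u', ⟨hu', fun he => huw (he ▸ hadj)⟩, hadj⟩
  exact (hY.le_of_le hcover Set.sdiff_subset hu).2 rfl

theorem exists_dependent_subsets [Finite V] {att : ℕ → V → Prop}
    (hpar : ∀ j < k, ∀ v ∈ E (j + 1), ¬ att (j + 1) v → ∃ u ∈ E j, G.Adj u v) :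
    ∃ F : ℕ → Set V, (∀ j ≤ k, F j ⊆ E j) ∧ F k = E k ∧
      (∀ j < k, ∀ v ∈ F (j + 1), ¬ att (j + 1) v → ∃ u ∈ F j, G.Adj u v) ∧
      ∀ j < k, ∀ u ∈ F j, ∃ w, IsDependent G F j u w ∧ ¬ att (j + 1) w := by
  induction k generalizing E with
  | zero => exact ⟨E, fun _ _ => subset_rfl, rfl, fun _ h => by omega, fun _ h => by omega⟩
  | succ k ih =>
    obtain ⟨Y, hYE, hYcover, hYdep⟩ := exists_minimal_cover (G := G) (X := E k)
      (W := {w ∈ E (k + 1) | ¬ att (k + 1) w}) fun w hw => hpar k k.lt_succ_self w hw.1 hw.2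
    have hsub : ∀ j, Function.update E k Y j ⊆ E j := by
      intro j
      rcases eq_or_ne j k with rfl | hj
      · simpa using hYE
      · simp [hj]
    obtain ⟨F, hFE, hFk, hFpar, hFdep⟩ := ih (E := Function.update E k Y) fun j hj v hv hva => by
      simpa [hj.ne] using hpar j (by omega) v (hsub _ hv) hva
    rw [Function.update_self] at hFk
    have hlow : ∀ j ≤ k, Function.update F (k + 1) (E (k + 1)) j = F j := fun j hj =>
      Function.update_of_ne (by omega) _ _
    refine ⟨Function.update F (k + 1) (E (k + 1)), fun j hj => ?_, by simp, fun j hj => ?_,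
      fun j hj => ?_⟩
    · rcases hj.eq_or_lt with rfl | hj
      · simp
      · exact hlow j (by omega) ▸ (hFE j (by omega)).trans (hsub j)
    · rcases (Nat.lt_succ_iff.1 hj).eq_or_lt with rfl | hj
      · simpa [hlow, hFk] using fun v hv hva => hYcover v ⟨hv, hva⟩
      · simpa [hlow, hj.le, Nat.succ_le_of_lt hj] using hFpar j hj
    · simp only [IsDependent, hlow j (by omega)]
      rcases (Nat.lt_succ_iff.1 hj).eq_or_lt with rfl | hj
      · simpa [hFk, and_assoc, and_comm, and_left_comm] using hYdep
      · simpa [IsDependent, hlow, Nat.succ_le_of_lt hj] using hFdep j hj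

theorem IsLevelling.path_parity (hL : IsLevelling G k L) (hG : OddHolesLE G l) (hl : 1 ≤ l)
    (hk : 1 ≤ k) (hC : (G.induce (L k)).Preconnected) (hu : u ∈ L (k - 1)) (hv : v ∈ L (k - 1))
    (hu' : ∃ x ∈ L k, G.Adj u x) (hv' : ∃ x ∈ L k, G.Adj v x)
    (hS : IsInducedPathOn G S u v m) (hT : IsInducedPathOn G T u v n)
    (hlm : 2 * l ≤ m) (hln : 2 * l ≤ n) (hSL : S ⊆ {u, v} ∪ lowerLevels L (k - 1))
    (hTL : T ⊆ {u, v} ∪ lowerLevels L (k - 1)) : m % 2 = n % 2 := by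
  obtain ⟨C, hCL, p, q, r, hp, hup, hvq, hup', hvq'⟩ := IsInducedPathOn.exists_between hC hu' hv'
  have closes_even : ∀ {S n}, IsInducedPathOn G S u v n → 2 * l ≤ n →
      S ⊆ {u, v} ∪ lowerLevels L (k - 1) → ¬ Odd (n + r) := by
    intro S n hS hn hSL
    refine hG.not_odd hS hp (by omega) hup.symm hvq.symm ?_ ?_ (by omega)
    · rintro x hx _ hxC rfl
      have : ∃ j < k, x ∈ L j := by
        rcases hSL hx with (rfl | rfl) | hx
        · exact ⟨k - 1, by omega, hu⟩
        · exact ⟨k - 1, by omega, hv⟩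
        · exact (mem_lowerLevels.1 hx).imp fun j hj => ⟨by omega, hj.2⟩
      obtain ⟨j, hj, hxj⟩ := this
      exact hj.ne (hL.index_eq hj.le le_rfl hxj (hCL hxC))
    · intro x hx y hy hxy
      rcases hSL hx with (rfl | rfl) | hx
      · exact Or.inl ⟨rfl, hup' y hy hxy.symm⟩
      · exact Or.inr ⟨rfl, hvq' y hy hxy.symm⟩
      · obtain ⟨j, hj, hx⟩ := mem_lowerLevels.1 hx
        have := hL.le_succ le_rfl hx (hCL hy) hxy.symm
        omega
  have hm := closes_even hS hlm hSL
  have hn := closes_even hT hln hTL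
  rw [Nat.odd_iff] at hm hn
  omega

end Levellings

section Branchings

/-- The ways in which a vertex of level `j` off the spine `c 0, …, c k` can be attached to it:
adjacent to `c (j - 1)` only, to `c j` only, or to both. The last kind is subdivided by the residue
of `j` modulo `l + 1`, so that vertices of one kind in different levels are far apart. -/
inductive Attachment (l : ℕ) : Type
  | parent : Attachment l
  | sibling : Attachment l
  | both (r : Fin (l + 1)) : Attachment l

/-- A vertex attached in level `j` has `c (j - κ.drop)` as its last neighbour on the spine `c`. -/
def Attachment.drop {l : ℕ} : Attachment l → ℕ
  | parent => 1
  | sibling => 0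
  | both _ => 0

/-- A vertex attached in level `j + 1` is adjacent to `c (j + κ.shift)`, so it keeps a parent when
the spine is moved up by `κ.shift` levels. -/
def Attachment.shift {l : ℕ} : Attachment l → ℕ
  | parent => 0
  | sibling => 1
  | both _ => 0

/-- The vertex `v` of level `j`, where `1 ≤ j < k - l`, is attached to the spine `c` in the way
prescribed by `κ`. -/
def Attached (G : SimpleGraph V) (k : ℕ) {l : ℕ} (c : ℕ → V) (κ : Attachment l) (j : ℕ) (v : V) :
    Prop :=
  1 ≤ j ∧ j < k - l ∧ match κ with
    | .parent => G.Adj (c (j - 1)) v ∧ ¬ G.Adj (c j) v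
    | .sibling => ¬ G.Adj (c (j - 1)) v ∧ G.Adj (c j) v
    | .both r => G.Adj (c (j - 1)) v ∧ G.Adj (c j) v ∧ j % (l + 1) = r

/-- Sets `E j` of vertices of a levelling `L` with connected last level, off a spine `c`, hanging
from the spine at the vertices attached to it in the way `κ`. The other vertices below the last
level are not adjacent to the spine and have a neighbour in the previous set. -/
structure IsBranching (G : SimpleGraph V) (k : ℕ) {l : ℕ} (L : ℕ → Set V) (c : ℕ → V)
    (κ : Attachment l) (E : ℕ → Set V) : Prop where
  levelling : IsLevelling G k L
  preconnected : (G.induce (L k)).Preconnected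
  spine : IsDependentChain G L c 0 k
  sub : ∀ j ≤ k, E j ⊆ L j
  notMem : ∀ j < k, c j ∉ E j
  eq_empty : E 0 = ∅
  exists_parent : ∀ j < k, ∀ v ∈ E (j + 1), ¬ Attached G k c κ (j + 1) v → ∃ u ∈ E j, G.Adj u v
  clean : ∀ j < k, ∀ v ∈ E j, ¬ Attached G k c κ j v → ¬ G.Adj (c j) v ∧ ¬ G.Adj (c (j - 1)) v
  dep : ∀ j < k, ∀ u ∈ E j, ∃ w, IsDependent G E j u w ∧ ¬ Attached G k c κ (j + 1) w

/-- A vertical path in the sets `E s, …, E q` whose first vertex, and no later one, is attached to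
the spine. -/
structure IsHanging (G : SimpleGraph V) (k : ℕ) {l : ℕ} (c : ℕ → V) (κ : Attachment l)
    (E : ℕ → Set V) (x : ℕ → V) (s q : ℕ) : Prop extends IsVerticalPath G E x s q where
  attached : Attached G k c κ s (x s)
  not_attached : ∀ j, s < j → j ≤ q → ¬ Attached G k c κ j (x j)

/-- A hanging path from level `s` to the last level `k` which is a dependent chain from level `r`
on. -/
structure IsBranch (G : SimpleGraph V) (k : ℕ) {l : ℕ} (c : ℕ → V) (κ : Attachment l)
    (E : ℕ → Set V) (x : ℕ → V) (s r : ℕ) : Prop extends IsHanging G k c κ E x s k where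
  chain : IsDependentChain G E x r k

variable {G : SimpleGraph V} {k l : ℕ} {L E : ℕ → Set V} {c x y A Y : ℕ → V} {κ : Attachment l}
  {h i j p q q' r s : ℕ} {a u v : V}

namespace Attachment

theorem drop_le (κ : Attachment l) : κ.drop ≤ 1 := by
  cases κ <;> simp [drop]

theorem shift_le (κ : Attachment l) : κ.shift ≤ 1 := by
  cases κ <;> simp [shift]

end Attachment

namespace Attached

theorem adj_drop (hv : Attached G k c κ j v) : G.Adj (c (j - κ.drop)) v := by
  cases κ <;> simp_all [Attached, Attachment.drop]

theorem adj_shift (hv : Attached G k c κ (j + 1) v) : G.Adj (c (j + κ.shift)) v := by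
  cases κ <;> simp_all [Attached, Attachment.shift]

theorem add_lt {r : Fin (l + 1)} (hu : Attached G k c (.both r) i u)
    (hv : Attached G k c (.both r) j v) (hij : i < j) : i + l < j := by
  by_contra hlt
  have hmod : i % (l + 1) = j % (l + 1) := hu.2.2.2.2.trans hv.2.2.2.2.symm
  have hdvd := (Nat.modEq_iff_dvd' hij.le).1 hmod
  have := Nat.le_of_dvd (by omega) hdvd
  omega

end Attached

theorem IsHanging.mono (hx : IsHanging G k c κ E x s q) (hq : q' ≤ q) :
    IsHanging G k c κ E x s q' :=
  ⟨hx.toIsVerticalPath.mono le_rfl hq, hx.attached, fun j hsj hjq =>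
    hx.not_attached j hsj (hjq.trans hq)⟩

namespace IsBranching

theorem isVerticalPath (hE : IsBranching G k L c κ E) (hx : IsVerticalPath G E x p q)
    (hq : q ≤ k) : IsVerticalPath G L x p q :=
  hx.of_subset fun j hj => hE.sub j (hj.trans hq)

theorem spine_ne (hE : IsBranching G k L c κ E) (hh : h ≤ k) (hj : j < k) (hv : v ∈ E j) :
    c h ≠ v := by
  rintro rfl
  obtain rfl := hE.levelling.index_eq hh hj.le
    (hE.spine.isVerticalPath.mem h (Nat.zero_le h) hh) (hE.sub j hj.le hv)
  exact hE.notMem h hj hv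

theorem eq_or_eq_of_adj (hE : IsBranching G k L c κ E) (hh : h ≤ k) (hj : j < k) (hv : v ∈ E j)
    (hadj : G.Adj (c h) v) : h = j ∨ h = j - 1 := by
  rcases hE.levelling.adj_cases hh hj.le (hE.spine.isVerticalPath.mem h (Nat.zero_le h) hh)
    (hE.sub j hj.le hv) hadj with rfl | rfl | rfl
  · exact Or.inl rfl
  · exact Or.inr (by omega)
  · exact absurd hadj.symm (hE.spine.not_adj_succ (Nat.zero_le j) hj (hE.sub j hj.le hv)
      (hE.spine_ne hj.le hj hv).symm)

theorem not_adj_spine (hE : IsBranching G k L c κ E) (hh : h ≤ k) (hj : j < k) (hv : v ∈ E j)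
    (hva : ¬ Attached G k c κ j v) : ¬ G.Adj (c h) v := by
  intro hadj
  rcases hE.eq_or_eq_of_adj hh hj hv hadj with rfl | rfl
  · exact (hE.clean h hj v hv hva).1 hadj
  · exact (hE.clean j hj v hv hva).2 hadj

theorem attached_of_adj_spine (hE : IsBranching G k L c κ E) (hh : h ≤ k) (hj : j < k)
    (hv : v ∈ E j) (hadj : G.Adj (c h) v) : Attached G k c κ j v := by
  by_contra hva
  exact hE.not_adj_spine hh hj hv hva hadj

theorem eq_of_adj_of_le (hE : IsBranching G k L c κ E) (hh : h ≤ k) (hj : j < k) (hv : v ∈ E j)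
    (hva : Attached G k c κ j v) (hjh : j - κ.drop ≤ h) (hadj : G.Adj (c h) v) :
    h = j - κ.drop := by
  have hj1 := hva.1
  rcases hE.eq_or_eq_of_adj hh hj hv hadj with rfl | rfl
  · cases κ <;> simp_all [Attached, Attachment.drop]
  · cases κ <;> simp only [Attachment.drop] at hjh ⊢ <;> omega

theorem eq_of_adj (hE : IsBranching G k L c κ E) (hκ : ∀ r, κ ≠ .both r) (hh : h ≤ k) (hj : j < k)
    (hv : v ∈ E j) (hva : Attached G k c κ j v) (hadj : G.Adj (c h) v) : h = j - κ.drop := by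
  rcases hE.eq_or_eq_of_adj hh hj hv hadj with rfl | rfl
  · cases κ <;> simp_all [Attached, Attachment.drop]
  · cases κ <;> simp_all [Attached, Attachment.drop]

theorem exists_isHanging (hE : IsBranching G k L c κ E) (hy : IsVerticalPath G E y j q)
    (hjq : j ≤ q) (hq : q ≤ k) (hya : ∀ h, j < h → h ≤ q → ¬ Attached G k c κ h (y h)) :
    ∃ s ≤ j, ∃ x, (∀ h, j ≤ h → x h = y h) ∧ IsHanging G k c κ E x s q := by
  induction j generalizing y with
  | zero =>
    have := hy.mem 0 le_rfl hjq
    rw [hE.eq_empty] at this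
    exact this.elim
  | succ j ih =>
    by_cases hatt : Attached G k c κ (j + 1) (y (j + 1))
    · exact ⟨j + 1, le_rfl, y, fun _ _ => rfl, hy, hatt, hya⟩
    · obtain ⟨u, hu, huy⟩ := hE.exists_parent j (by omega) _ (hy.mem _ le_rfl hjq) hatt
      obtain ⟨s, hs, x, hxy, hx⟩ := ih (hy.cons hu huy) (by omega) fun h hjh hhq => by
        rw [Function.update_of_ne hjh.ne']
        rcases (Nat.succ_le_of_lt hjh).eq_or_lt with rfl | hjh
        · exact hatt
        · exact hya h hjh hhq
      exact ⟨s, by omega, x, fun h hjh => by simp [hxy h (by omega), (show h ≠ j by omega)], hx⟩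

theorem exists_isBranch (hE : IsBranching G k L c κ E) (hr : r ≤ k) (hv : v ∈ E r) :
    ∃ s ≤ r, ∃ x, x r = v ∧ IsBranch G k c κ E x s r := by
  obtain ⟨y, hy, rfl, hya⟩ := exists_dependentChain hE.dep hr hv
  obtain ⟨s, hs, x, hxy, hx⟩ := hE.exists_isHanging hy.isVerticalPath hr le_rfl hya
  exact ⟨s, hs, x, hxy r le_rfl, hx, hy.congr hxy⟩

theorem exists_isBranch_of_attached (hE : IsBranching G k L c κ E) (hr : r ≤ k) (hv : v ∈ E r)
    (hva : Attached G k c κ r v) : ∃ x, x r = v ∧ IsBranch G k c κ E x r r := by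
  obtain ⟨x, hx, rfl, hxa⟩ := exists_dependentChain hE.dep hr hv
  exact ⟨x, rfl, ⟨hx.isVerticalPath, hva, hxa⟩, hx⟩

theorem isAnticomplete_spine (hE : IsBranching G k L c κ E) {I : Set ℕ} (hI : I ⊆ Set.Iic k)
    (hx : IsVerticalPath G E x p q) (hq : q < k)
    (hxa : ∀ j, p ≤ j → j ≤ q → ¬ Attached G k c κ j (x j)) :
    IsAnticomplete G (c '' I) (x '' Set.Icc p q) := by
  rintro _ ⟨h, hh, rfl⟩ _ ⟨j, ⟨hpj, hjq⟩, rfl⟩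
  have hj := hx.mem j hpj hjq
  exact ⟨hE.spine_ne (hI hh) (by omega) hj,
    hE.not_adj_spine (hI hh) (by omega) hj (hxa j hpj hjq)⟩

theorem isJoin_spine (hE : IsBranching G k L c κ E) {I : Set ℕ} (hI : I ⊆ Set.Iic k)
    (hx : IsHanging G k c κ E x s q) (hq : q < k)
    (huniq : ∀ h ∈ I, G.Adj (c h) (x s) → h = s - κ.drop) :
    IsJoin G (c '' I) (x '' Set.Icc s q) (c (s - κ.drop)) (x s) := by
  refine ⟨hx.attached.adj_drop, ?_, ?_⟩ <;>
    rintro _ ⟨h, hh, rfl⟩ _ ⟨j, ⟨hsj, hjq⟩, rfl⟩ <;> have hj := hx.mem j hsj hjq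
  · exact hE.spine_ne (hI hh) (by omega) hj
  · intro hadj
    rcases hsj.eq_or_lt with rfl | hsj
    · exact ⟨congrArg c (huniq h hh hadj), rfl⟩
    · exact absurd hadj (hE.not_adj_spine (hI hh) (by omega) hj (hx.not_attached j hsj hjq))

theorem spine_path (hE : IsBranching G k L c κ E) (hx : IsHanging G k c κ E x s q)
    (hsq : s ≤ q) (hq : q < k) :
    IsInducedPathOn G (c '' Set.Icc (s - κ.drop) (k - 1) ∪ x '' Set.Icc s q) (c (k - 1)) (x q)
      (k - 1 - (s - κ.drop) + 1 + (q - s)) := by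
  have hc := hE.spine.isVerticalPath.mono (Nat.zero_le (s - κ.drop)) (Nat.sub_le k 1)
  have hxL := hE.isVerticalPath hx.toIsVerticalPath hq.le
  refine (hc.isInducedPathOn hE.levelling (by omega) (by omega)).symm.append
    (hxL.isInducedPathOn hE.levelling hsq hq.le)
    (hE.isJoin_spine (fun h hh => hh.2.trans (Nat.sub_le k 1)) hx hq fun h hh hadj => ?_)
  exact hE.eq_of_adj_of_le (hh.2.trans (Nat.sub_le k 1)) (by omega) (hx.mem s le_rfl hsq)
    hx.attached hh.1 hadj

theorem spine_path_subset (hE : IsBranching G k L c κ E) (hx : IsHanging G k c κ E x s (k - 1)) :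
    c '' Set.Icc p (k - 1) ∪ x '' Set.Icc s (k - 1) ⊆
      {c (k - 1), x (k - 1)} ∪ lowerLevels L (k - 1) := by
  have hc := (hE.spine.isVerticalPath.mono (Nat.zero_le p)
    (Nat.sub_le k 1)).image_subset_insert_lowerLevels
  have hxL := (hE.isVerticalPath hx.toIsVerticalPath
    (Nat.sub_le k 1)).image_subset_insert_lowerLevels
  rintro z (hz | hz)
  · exact (hc hz).imp Or.inl id
  · exact (hxL hz).imp Or.inr id

theorem horizontal_path (hE : IsBranching G k L c κ E) (hsi : s ≤ i) (hik : i < k)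
    (hx : IsHanging G k c κ E x s i) (hy : IsVerticalPath G E y i (k - 1))
    (hya : ∀ h, i ≤ h → h ≤ k - 1 → ¬ Attached G k c κ h (y h)) (hxy : G.Adj (x i) (y i))
    (hdown : s < i → ¬ G.Adj (x (i - 1)) (y i)) (hup : i < k - 1 → ¬ G.Adj (x i) (y (i + 1))) :
    IsInducedPathOn G
      (c '' Set.Icc (s - κ.drop) (k - 1) ∪ x '' Set.Icc s i ∪ y '' Set.Icc i (k - 1))
      (c (k - 1)) (y (k - 1)) (k - 1 - (s - κ.drop) + 1 + (i - s) + 1 + (k - 1 - i)) := by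
  have hxL := hE.isVerticalPath hx.toIsVerticalPath hik.le
  have hyL := hE.isVerticalPath hy (Nat.sub_le k 1)
  refine (hE.spine_path hx hsi hik).append
    (hyL.isInducedPathOn hE.levelling (by omega) (Nat.sub_le k 1)) ?_
  exact (hxL.isJoin_horizontal hyL hE.levelling hsi (by omega) (Nat.sub_le k 1) hxy hdown
    hup).union_left
      (hE.isAnticomplete_spine (fun h hh => hh.2.trans (Nat.sub_le k 1)) hy (by omega) hya)

theorem exists_adj_last (hE : IsBranching G k L c κ E) (hk : 1 ≤ k) (hv : v ∈ E (k - 1)) :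
    ∃ w ∈ L k, G.Adj v w := by
  obtain ⟨w, ⟨hw, hvw, -⟩, -⟩ := hE.dep (k - 1) (by omega) v hv
  rw [Nat.sub_add_cancel hk] at hw
  exact ⟨w, hE.sub k le_rfl hw, hvw⟩

/- Such an edge would give a path from `c (k - 1)` to `y (k - 1)` whose length differs in parity
from that of a path running down from the spine to `y (k - 1)`. -/
theorem not_horizontal (hE : IsBranching G k L c κ E) (hG : OddHolesLE G l) (hl : 1 ≤ l)
    (hsi : s ≤ i) (hik : i + 2 ≤ k) (hx : IsHanging G k c κ E x s i)
    (hy : IsVerticalPath G E y i (k - 1))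
    (hya : ∀ h, i ≤ h → h ≤ k - 1 → ¬ Attached G k c κ h (y h))
    (hdown : s < i → ¬ G.Adj (x (i - 1)) (y i)) (hup : ¬ G.Adj (x i) (y (i + 1))) :
    ¬ G.Adj (x i) (y i) := by
  intro hxy
  have hL := hE.levelling
  have hyk := hy.mem (k - 1) (by omega) le_rfl
  have hck := hE.spine.isVerticalPath.adj (k - 1) (Nat.zero_le _) (by omega)
  rw [show k - 1 + 1 = k by omega] at hck
  have hpath := hE.horizontal_path hsi (by omega) hx hy hya hxy hdown fun _ => hup
  obtain ⟨r, hr, z, hzy, hz⟩ := hE.exists_isHanging (q := k - 1) (IsVerticalPath.single hyk) le_rfl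
    (Nat.sub_le k 1) fun h _ _ => by omega
  have hpath' := hE.spine_path hz hr (by omega)
  have hsub := hE.spine_path_subset (p := r - κ.drop) hz
  rw [hzy _ le_rfl] at hpath' hsub
  have hxL := (hE.isVerticalPath hx.toIsVerticalPath (by omega)).image_subset_lowerLevels
    (show i < k - 1 by omega)
  have hyL := hE.isVerticalPath hy (Nat.sub_le k 1)
  have hcL := hE.spine.isVerticalPath.mono (Nat.zero_le (s - κ.drop)) (Nat.sub_le k 1)
  have hpar := hL.path_parity hG hl (by omega) hE.preconnected (hcL.mem _ (by omega) le_rfl)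
    (hE.sub _ (Nat.sub_le k 1) hyk)
    ⟨c k, hE.spine.isVerticalPath.mem k (Nat.zero_le k) le_rfl, hck⟩
    (hE.exists_adj_last (by omega) hyk) hpath' hpath
    (by have := hz.attached.2.1; omega) (by have := hx.attached.2.1; omega) hsub (by
      rintro z ((hz | hz) | hz)
      · exact (hcL.image_subset_insert_lowerLevels hz).imp Or.inl id
      · exact Or.inr (hxL hz)
      · exact (hyL.image_subset_insert_lowerLevels hz).imp Or.inr id)
  have := κ.drop_le
  have := hx.attached.1
  have := hz.attached.1
  omega

theorem attached_of_adj (hE : IsBranching G k L c κ E) (hG : OddHolesLE G l) (hl : 1 ≤ l)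
    (hik : i + 2 ≤ k) (hu : u ∈ E i) (hv : v ∈ E i) (huv : G.Adj u v)
    (hua : Attached G k c κ i u) : Attached G k c κ i v := by
  by_contra hva
  obtain ⟨y, hy, rfl, hya⟩ := exists_dependentChain hE.dep (by omega) hv
  refine hE.not_horizontal hG hl le_rfl hik (x := fun _ => u)
    ⟨.single hu, hua, fun h _ _ => by omega⟩ (hy.isVerticalPath.mono le_rfl (Nat.sub_le k 1))
    (fun h hih hhk => ?_) (fun h => by omega) (hy.not_adj_succ le_rfl (by omega) hu huv.ne) huv
  rcases hih.eq_or_lt with rfl | hih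
  · exact hva
  · exact hya h hih (by omega)

theorem adj_of_not_attached (hE : IsBranching G k L c κ E) (hG : OddHolesLE G l) (hl : 1 ≤ l)
    (hjk : j + 3 ≤ k) (ha : a ∈ E j) (hu : u ∈ E (j + 1)) (hv : v ∈ E (j + 1)) (huv : G.Adj u v)
    (hua : ¬ Attached G k c κ (j + 1) u) (hva : ¬ Attached G k c κ (j + 1) v)
    (hau : G.Adj a u) : G.Adj a v := by
  by_contra hav
  have hedge : IsVerticalPath G E (Function.update (fun _ => u) j a) j (j + 1) :=
    (IsVerticalPath.single (x := fun _ => u) hu).cons ha hau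
  obtain ⟨s, hs, x, hxu, hx⟩ := hE.exists_isHanging hedge (Nat.le_succ j) (by omega)
    fun h hjh hhj => by
      obtain rfl : h = j + 1 := by omega
      simpa using hua
  have hxa : x j = a := by simpa using hxu j le_rfl
  have hxu : x (j + 1) = u := by simpa using hxu (j + 1) (Nat.le_succ j)
  obtain ⟨y, hy, rfl, hya⟩ := exists_dependentChain hE.dep (by omega) hv
  refine hE.not_horizontal hG hl (hs.trans (Nat.le_succ j)) hjk hx
    (hy.isVerticalPath.mono le_rfl (Nat.sub_le k 1)) (fun h hjh hhk => ?_)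
    (fun _ => by simpa [hxa] using hav) ?_ (hxu ▸ huv)
  · rcases hjh.eq_or_lt with rfl | hjh
    · exact hva
    · exact hya h hjh (by omega)
  · exact hxu ▸ hy.not_adj_succ le_rfl (by omega) hu huv.ne

/- The cycle up from `v` through `a` to the spine and back down has length `2 * (j - s) + 3`, where
`s` is the level at which it meets the spine, and `j - s ≥ l` because of the residues. -/
theorem not_adj_of_attached {m : Fin (l + 1)} (hE : IsBranching G k L c (.both m) E)
    (hG : OddHolesLE G l) (ha : a ∈ E j) (hv : v ∈ E (j + 1))
    (hva : Attached G k c (.both m) (j + 1) v) : ¬ G.Adj a v := by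
  intro hav
  have hL := hE.levelling
  have hjk := hva.2.1
  have hcv : G.Adj (c j) v := hva.2.2.1
  have hvL := hE.sub _ (by omega) hv
  obtain ⟨s, hs, x, hxa, hx⟩ := hE.exists_isHanging
    (IsVerticalPath.single (x := fun _ => a) ha) le_rfl (by omega) fun h _ _ => by omega
  obtain rfl : x j = a := hxa j le_rfl
  have hsj := hx.attached.add_lt hva (by omega)
  have hxL := hE.isVerticalPath hx.toIsVerticalPath (by omega)
  have hcL := hE.spine.isVerticalPath.mono (Nat.zero_le s) (show j ≤ k by omega)
  have hjoin := hE.isJoin_spine (I := Set.Icc s j) (fun h hh => hh.2.trans (by omega)) hx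
    (by omega) fun h hh hadj => hE.eq_of_adj_of_le (hh.2.trans (by omega)) (by omega)
      (hx.mem s le_rfl hs) hx.attached hh.1 hadj
  have hpath := (hxL.isInducedPathOn hL hs (by omega)).symm.append
    (hcL.isInducedPathOn hL hs (by omega)) hjoin.symm
  refine hG.not_odd hpath (.single v) (by omega) hav.symm hcv.symm ?_ ?_ (by omega)
    ⟨j - s, by omega⟩
  · rintro _ (⟨h, ⟨hsh, hhj⟩, rfl⟩ | ⟨h, ⟨hsh, hhj⟩, rfl⟩) _ rfl rfl
    · have := hL.index_eq (by omega) (by omega) (hxL.mem h hsh hhj) hvL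
      omega
    · have := hL.index_eq (by omega) (by omega) (hcL.mem h hsh hhj) hvL
      omega
  · rintro _ (⟨h, ⟨hsh, hhj⟩, rfl⟩ | ⟨h, ⟨hsh, hhj⟩, rfl⟩) _ rfl hadj
    · have := hL.le_succ (by omega) (hxL.mem h hsh hhj) hvL hadj.symm
      exact Or.inl ⟨congrArg x (by omega), rfl⟩
    · have := hL.le_succ (by omega) (hcL.mem h hsh hhj) hvL hadj.symm
      exact Or.inr ⟨congrArg c (by omega), rfl⟩

theorem isJoin_spine_of_ne_both (hE : IsBranching G k L c κ E) (hκ : ∀ m, κ ≠ .both m)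
    (hp : p ≤ k) (hx : IsHanging G k c κ E x s q) (hsq : s ≤ q) (hq : q < k) :
    IsJoin G (c '' Set.Icc i p) (x '' Set.Icc s q) (c (s - κ.drop)) (x s) :=
  hE.isJoin_spine (fun _ hh => hh.2.trans hp) hx hq fun _ hh hadj =>
    hE.eq_of_adj hκ (hh.2.trans hp) (by omega) (hx.mem s le_rfl hsq) hx.attached hadj

theorem spine_leg_path (hE : IsBranching G k L c κ E) (hκ : ∀ m, κ ≠ .both m)
    (hp : p ≤ i - κ.drop) (hiq : i ≤ q) (hq : q < k) (hy : IsHanging G k c κ E y i q) :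
    IsInducedPathOn G (c '' Set.Icc p (i - κ.drop) ∪ y '' Set.Icc i q) (c p) (y q)
      (i - κ.drop - p + 1 + (q - i)) := by
  have hik : i - κ.drop ≤ k := by omega
  have hcL := hE.spine.isVerticalPath.mono (Nat.zero_le p) hik
  have hyL := hE.isVerticalPath hy.toIsVerticalPath hq.le
  exact (hcL.isInducedPathOn hE.levelling hp hik).append
    (hyL.isInducedPathOn hE.levelling hiq hq.le) (hE.isJoin_spine_of_ne_both hκ hik hy hiq hq)

theorem two_leg_path (hE : IsBranching G k L c κ E) (hκ : ∀ m, κ ≠ .both m) (hsi : s ≤ i)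
    (hsq : s ≤ q) (hq : q < k) (hiq : i ≤ q') (hq' : q' < k) (hx : IsHanging G k c κ E x s q)
    (hy : IsHanging G k c κ E y i q')
    (hxy : IsAnticomplete G (x '' Set.Icc s q) (y '' Set.Icc i q')) :
    IsInducedPathOn G
      (x '' Set.Icc s q ∪ (y '' Set.Icc i q' ∪ c '' Set.Icc (s - κ.drop) (i - κ.drop)))
      (x q) (y q') (q - s + 1 + (i - κ.drop - (s - κ.drop) + 1 + (q' - i))) := by
  have hxL := hE.isVerticalPath hx.toIsVerticalPath hq.le
  have hleg := hE.spine_leg_path hκ (Nat.sub_le_sub_right hsi κ.drop) hiq hq' hy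
  rw [Set.union_comm] at hleg
  exact (hxL.isInducedPathOn hE.levelling hsq hq.le).symm.append hleg
    ((hE.isJoin_spine_of_ne_both hκ (by omega) hx hsq hq).union_left hxy.symm).symm

theorem branch_ne (hA : IsBranch G k c κ E A s r) (hs : s ≤ r)
    (hY : IsBranch G k c κ E Y (r + 1) (r + 1)) (hj : r + 1 ≤ j) (hjk : j ≤ k) : A j ≠ Y j :=
  hY.chain.ne (hA.toIsVerticalPath.mono (by omega) le_rfl)
    (fun he => hA.not_attached (r + 1) (by omega) (by omega) (he ▸ hY.attached)) hj hjk

theorem not_adj_branch (hE : IsBranching G k L c κ E) (hG : OddHolesLE G l) (hl : 1 ≤ l)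
    (hA : IsBranch G k c κ E A s r) (hs : s ≤ r) (hY : IsBranch G k c κ E Y (r + 1) (r + 1))
    (hj : r + 1 ≤ j) (hjk : j + 2 ≤ k) : ¬ G.Adj (A j) (Y j) := by
  have hYA : ∀ i, r + 1 ≤ i → i < k → ¬ G.Adj (Y i) (A (i + 1)) := fun i hri hik =>
    hA.chain.not_adj_succ (by omega) hik (hY.mem i hri hik.le)
      (branch_ne hA hs hY hri hik.le).symm
  refine fun hadj => hE.not_horizontal hG hl hj hjk (hY.toIsHanging.mono (by omega))
    (hA.toIsVerticalPath.mono (by omega) (Nat.sub_le k 1))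
    (fun h hjh hhk => hA.not_attached h (by omega) (by omega)) (fun hrj => ?_)
    (hYA j hj (by omega)) hadj.symm
  have := hYA (j - 1) (by omega) (by omega)
  rwa [show j - 1 + 1 = j by omega] at this

theorem branch_ne_and_eq_of_adj (hE : IsBranching G k L c κ E) (hG : OddHolesLE G l) (hl : 1 ≤ l)
    (hA : IsBranch G k c κ E A s r) (hs : s ≤ r) (hY : IsBranch G k c κ E Y (r + 1) (r + 1))
    (hAY : ¬ G.Adj (A r) (Y (r + 1))) (hsh : s ≤ h) (hhk : h < k) (hrj : r + 1 ≤ j) (hjk : j < k) :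
    A h ≠ Y j ∧ (G.Adj (A h) (Y j) → h = k - 1 ∧ j = k - 1) := by
  have hAup : ∀ j, s ≤ j → j ≤ k → r + 1 ≤ j + 1 → j + 1 ≤ k → ¬ G.Adj (A j) (Y (j + 1)) := by
    intro j hsj _ hrj hjk
    rcases (Nat.succ_le_succ_iff.1 hrj).eq_or_lt with rfl | hrj
    · exact hAY
    · exact hY.chain.not_adj_succ hrj hjk (hA.mem j hsj (by omega))
        (branch_ne hA hs hY hrj (by omega))
  have hYup : ∀ j, r + 1 ≤ j → j ≤ k → s ≤ j + 1 → j + 1 ≤ k → ¬ G.Adj (Y j) (A (j + 1)) :=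
    fun j hrj _ _ hjk => hA.chain.not_adj_succ (by omega) hjk (hY.mem j hrj (by omega))
      (branch_ne hA hs hY hrj (by omega)).symm
  refine ((hE.isVerticalPath hA.toIsVerticalPath le_rfl).ne_and_eq_of_adj
    (hE.isVerticalPath hY.toIsVerticalPath le_rfl) hE.levelling le_rfl le_rfl
    (fun j _ hj hrj _ => branch_ne hA hs hY hrj hj) hAup hYup hsh hhk.le hrj hjk.le).imp_right
    fun heq hadj => ?_
  obtain rfl := heq hadj
  have : ¬ h + 2 ≤ k := fun hhk => hE.not_adj_branch hG hl hA hs hY hrj hhk hadj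
  omega

theorem not_adj_branch_last (hE : IsBranching G k L c κ E) (hG : OddHolesLE G l) (hl : 1 ≤ l)
    (hκ : ∀ m, κ ≠ .both m) (hA : IsBranch G k c κ E A s r) (hs : s ≤ r)
    (hY : IsBranch G k c κ E Y (r + 1) (r + 1)) (hAY : ¬ G.Adj (A r) (Y (r + 1))) :
    ¬ G.Adj (A (k - 1)) (Y (k - 1)) := by
  intro hlast
  have hsk := hA.attached.2.1
  have hrk := hY.attached.2.1
  have hleg := hE.spine_leg_path (q := k - 1) hκ (Nat.sub_le_sub_right (hs.trans r.le_succ) κ.drop)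
    (by omega) (by omega) (hY.toIsHanging.mono (Nat.sub_le k 1))
  have hpath := ((hE.isVerticalPath hA.toIsVerticalPath le_rfl).mono le_rfl
    (Nat.sub_le k 1)).isInducedPathOn hE.levelling (by omega) (Nat.sub_le k 1)
  have hjoin := hE.isJoin_spine_of_ne_both (i := s - κ.drop) (p := r + 1 - κ.drop) hκ (by omega)
    (hA.toIsHanging.mono (Nat.sub_le k 1)) (by omega) (by omega)
  have hadj {h j : ℕ} (hsh : s ≤ h) (hhk : h ≤ k - 1) (hrj : r + 1 ≤ j) (hjk : j ≤ k - 1) :=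
    hE.branch_ne_and_eq_of_adj hG hl hA hs hY hAY hsh (by omega) hrj (show j < k by omega)
  have := hA.attached.1
  have := κ.drop_le
  refine hG.not_odd hpath hleg (by omega) hjoin.adj hlast.symm ?_ ?_ (by omega)
    ⟨k - s - 1, by omega⟩
  · rintro _ ⟨h, ⟨hsh, hhk⟩, rfl⟩ _ (hz | ⟨j, ⟨hrj, hjk⟩, rfl⟩)
    · exact (hjoin.ne _ hz _ ⟨h, ⟨hsh, hhk⟩, rfl⟩).symm
    · exact (hadj hsh hhk hrj hjk).1
  · rintro _ ⟨h, ⟨hsh, hhk⟩, rfl⟩ _ (hz | ⟨j, ⟨hrj, hjk⟩, rfl⟩) hzA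
    · exact Or.inl (hjoin.eq_of_adj _ hz _ ⟨h, ⟨hsh, hhk⟩, rfl⟩ hzA).symm
    · obtain ⟨rfl, rfl⟩ := (hadj hsh hhk hrj hjk).2 hzA.symm
      exact Or.inr ⟨rfl, rfl⟩

theorem isAnticomplete_branch (hE : IsBranching G k L c κ E) (hG : OddHolesLE G l) (hl : 1 ≤ l)
    (hκ : ∀ m, κ ≠ .both m) (hA : IsBranch G k c κ E A s r) (hs : s ≤ r)
    (hY : IsBranch G k c κ E Y (r + 1) (r + 1)) (hAY : ¬ G.Adj (A r) (Y (r + 1))) :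
    IsAnticomplete G (A '' Set.Icc s (k - 1)) (Y '' Set.Icc (r + 1) (k - 1)) := by
  have := hY.attached.2.1
  rintro _ ⟨h, ⟨hsh, hhk⟩, rfl⟩ _ ⟨j, ⟨hrj, hjk⟩, rfl⟩
  refine (hE.branch_ne_and_eq_of_adj hG hl hA hs hY hAY hsh (by omega) hrj (by omega)).imp_right
    fun heq hadj => ?_
  obtain ⟨rfl, rfl⟩ := heq hadj
  exact hE.not_adj_branch_last hG hl hκ hA hs hY hAY hadj

theorem isJoin_attached (hE : IsBranching G k L c κ E) (hG : OddHolesLE G l) (hl : 1 ≤ l)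
    (hA : IsBranch G k c κ E A s r) (hs : s ≤ r) (hr : r + 3 ≤ k) (hv : v ∈ E (r + 1))
    (hva : Attached G k c κ (r + 1) v) (hadj : G.Adj (A r) v) :
    IsJoin G (A '' Set.Icc r (k - 1)) {v} (A r) v := by
  have hAr := hA.mem (r + 1) (by omega) (by omega)
  have hAva := hA.not_attached (r + 1) (by omega) (by omega)
  have hne : v ≠ A (r + 1) := fun he => hAva (he ▸ hva)
  have hAL := hE.isVerticalPath hA.toIsVerticalPath le_rfl
  have hvL := hE.sub _ (by omega) hv
  refine ⟨hadj, ?_, ?_⟩ <;> rintro _ ⟨h, ⟨hrh, hhk⟩, rfl⟩ _ rfl hAv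
  · obtain rfl := hE.levelling.index_eq (by omega) (by omega) (hAL.mem h (by omega) (by omega))
      (hAv ▸ hvL)
    exact hne hAv.symm
  · refine ⟨?_, rfl⟩
    rcases hE.levelling.adj_cases (by omega) (by omega) (hAL.mem h (by omega) (by omega)) hvL hAv
      with rfl | hh | rfl
    · exact absurd (hE.attached_of_adj hG hl (by omega) hv hAr hAv.symm hva) hAva
    · exact congrArg A (by omega)
    · exact absurd hAv.symm (hA.chain.not_adj_succ (by omega) (by omega) hv hne)

theorem detour_path (hE : IsBranching G k L c κ E) (hG : OddHolesLE G l) (hl : 1 ≤ l)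
    (hA : IsBranch G k c κ E A s r) (hs : s ≤ r) (hr : r + 3 ≤ k)
    (hY : IsBranch G k c κ E Y (r + 1) (r + 1)) (hv : v ∈ E (r + 1))
    (hva : Attached G k c κ (r + 1) v) (hAv : G.Adj (A r) v) (hvY : G.Adj v (Y (r + 1)))
    (hAY : IsAnticomplete G (A '' Set.Icc s (k - 1)) (Y '' Set.Icc (r + 1) (k - 1))) :
    IsInducedPathOn G (A '' Set.Icc r (k - 1) ∪ {v} ∪ Y '' Set.Icc (r + 1) (k - 1)) (A (k - 1))
      (Y (k - 1)) (k - 1 - r + 1 + 0 + 1 + (k - 1 - (r + 1))) := by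
  have hL := hE.levelling
  have hvL := hE.sub _ (by omega) hv
  have hAL := (hE.isVerticalPath hA.toIsVerticalPath le_rfl).mono hs (Nat.sub_le k 1)
  have hYL := (hE.isVerticalPath hY.toIsVerticalPath le_rfl).mono le_rfl (Nat.sub_le k 1)
  have hvjoin : IsJoin G {v} (Y '' Set.Icc (r + 1) (k - 1)) v (Y (r + 1)) := by
    simpa using (IsVerticalPath.single (x := fun _ => v) hvL).isJoin_horizontal hYL hL le_rfl
      (by omega) (Nat.sub_le k 1) hvY (fun h => by omega)
      fun _ => hY.chain.not_adj_succ le_rfl (by omega) hv hvY.ne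
  exact ((hAL.isInducedPathOn hL (by omega) (Nat.sub_le k 1)).symm.append (.single v)
    (hE.isJoin_attached hG hl hA hs hr hv hva hAv)).append
    (hYL.isInducedPathOn hL (by omega) (Nat.sub_le k 1))
    (hvjoin.union_left fun z hz => hAY z (Set.image_mono (Set.Icc_subset_Icc_left hs) hz))

/- The path through `u` is one edge longer, modulo two, than the one through the spine. -/
theorem adj_of_attached (hE : IsBranching G k L c κ E) (hG : OddHolesLE G l) (hl : 1 ≤ l)
    (hκ : ∀ m, κ ≠ .both m) (hr : r + 3 ≤ k) (ha : a ∈ E r) (hu : u ∈ E (r + 1))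
    (hv : v ∈ E (r + 1)) (huv : G.Adj u v) (hua : Attached G k c κ (r + 1) u)
    (hva : Attached G k c κ (r + 1) v) (hau : G.Adj a u) : G.Adj a v := by
  by_contra hav
  obtain ⟨s, hs, A, rfl, hA⟩ := hE.exists_isBranch (by omega) ha
  obtain ⟨Y, rfl, hY⟩ := hE.exists_isBranch_of_attached (by omega) hv hva
  have hsk := hA.attached.2.1
  have hrk := hva.2.1
  have hAY := hE.isAnticomplete_branch hG hl hκ hA hs hY hav
  have hpath := hE.two_leg_path hκ (hs.trans r.le_succ) (by omega) (by omega) (by omega) (by omega)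
    (hA.toIsHanging.mono (Nat.sub_le k 1)) (hY.toIsHanging.mono (Nat.sub_le k 1)) hAY
  have hdetour := hE.detour_path hG hl hA hs hr hY hu hua hau huv hAY
  have hAE := hA.toIsVerticalPath.mono le_rfl (Nat.sub_le k 1)
  have hYE := hY.toIsVerticalPath.mono le_rfl (Nat.sub_le k 1)
  have hAL := (hE.isVerticalPath hAE (Nat.sub_le k 1)).image_subset_insert_lowerLevels
  have hYL := (hE.isVerticalPath hYE (Nat.sub_le k 1)).image_subset_insert_lowerLevels
  have hAk := hAE.mem (k - 1) (by omega) le_rfl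
  have hYk := hYE.mem (k - 1) (by omega) le_rfl
  have hcL := (hE.spine.isVerticalPath.mono (Nat.zero_le (s - κ.drop))
    (show r + 1 - κ.drop ≤ k by omega)).image_subset_lowerLevels (n := k - 1) (by omega)
  have := hA.attached.1
  have := κ.drop_le
  have := hE.levelling.path_parity hG hl (by omega) hE.preconnected
    (hE.sub _ (Nat.sub_le k 1) hAk) (hE.sub _ (Nat.sub_le k 1) hYk)
    (hE.exists_adj_last (by omega) hAk) (hE.exists_adj_last (by omega) hYk) hpath hdetour
    (by omega) (by omega) (by
      rintro z (hz | hz | hz)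
      · exact (hAL hz).imp Or.inl id
      · exact (hYL hz).imp Or.inr id
      · exact Or.inr (hcL hz)) (by
      rintro z ((hz | rfl) | hz)
      · exact (hAL (Set.image_mono (Set.Icc_subset_Icc_left hs) hz)).imp Or.inl id
      · exact Or.inr (mem_lowerLevels.2 ⟨r + 1, by omega, hE.sub _ (by omega) hu⟩)
      · exact (hYL hz).imp Or.inr id)
  omega

end IsBranching

end Branchings

section UniformParents

/-- Any two adjacent vertices of a level `M i` with `1 ≤ i ≤ n` have the same parents. -/
def HasUniformParents (G : SimpleGraph V) (n : ℕ) (M : ℕ → Set V) : Prop :=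
  ∀ i, 1 ≤ i → i ≤ n → ∀ u ∈ M i, ∀ v ∈ M i, G.Adj u v →
    ∀ w ∈ M (i - 1), (G.Adj w u ↔ G.Adj w v)

/-- The set `A` lies in the last level of a levelling `(M 0, …, M k)` with uniform parents up to
level `n`. -/
def IsUniformlyLevelled (G : SimpleGraph V) (k n : ℕ) (A : Set V) : Prop :=
  ∃ M, IsLevelling G k M ∧ HasUniformParents G n M ∧ A ⊆ M k

theorem IsLevelling.isUniformlyLevelled_empty {G : SimpleGraph V} {k n : ℕ} {L : ℕ → Set V}
    (hL : IsLevelling G k L) : IsUniformlyLevelled G k n ∅ := by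
  obtain ⟨x, hx⟩ := hL.2.1
  refine ⟨fun j => if j = 0 then L 0 else ∅, hL.of_subset (fun j _ => ?_) ⟨x, hx⟩ ?_, ?_,
    Set.empty_subset _⟩
  · split_ifs with hj
    · rw [hj]
    · exact Set.empty_subset _
  · simp
  · intro i hi _ u hu
    simp [show i ≠ 0 by omega] at hu

theorem HasUniformParents.of_imp {G : SimpleGraph V} {n : ℕ} {M : ℕ → Set V}
    (h : ∀ i < n, ∀ u ∈ M (i + 1), ∀ v ∈ M (i + 1), G.Adj u v →
      ∀ w ∈ M i, G.Adj w u → G.Adj w v) : HasUniformParents G n M := by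
  rintro (_ | i) hi hin u hu v hv huv w hw
  · omega
  · exact ⟨h i hin u hu v hv huv w hw, h i hin v hv u hu huv.symm w hw⟩

end UniformParents

section Branchings

variable {G : SimpleGraph V} {k l : ℕ} {L E : ℕ → Set V} {c : ℕ → V} {κ : Attachment l}
  {h i j n : ℕ} {u v w : V}

/-- The sets `E j` completed to a levelling by the part of the spine `c` above level `t`, moved up
by `e` levels. -/
def withSpine (E : ℕ → Set V) (c : ℕ → V) (t e j : ℕ) : Set V :=
  E j ∪ {v | j + 2 ≤ t ∧ v = c (j + e)}

namespace IsBranching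

theorem eq_of_adj_shift (hE : IsBranching G k L c κ E) (hh : h + κ.shift ≤ k) (hj : j < k)
    (hv : v ∈ E j) (hadj : G.Adj (c (h + κ.shift)) v) : h + 1 = j ∨ h = j ∧ κ.shift = 0 := by
  have hva := hE.attached_of_adj_spine hh hj hv hadj
  have := hva.1
  cases κ with
  | sibling =>
    have := hE.eq_of_adj (by simp) hh hj hv hva hadj
    simp only [Attachment.shift, Attachment.drop] at this
    omega
  | _ =>
    have := hE.eq_or_eq_of_adj hh hj hv hadj
    simp only [Attachment.shift, and_true] at this ⊢
    omega

theorem isLevelling_withSpine (hE : IsBranching G k L c κ E) (hl : 1 ≤ l) (ht : 2 ≤ k - l) :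
    IsLevelling G k (withSpine E c (k - l) κ.shift) := by
  have hL := hE.levelling
  have he := κ.shift_le
  have hc : ∀ j, j + 2 ≤ k - l → c (j + κ.shift) ∈ L (j + κ.shift) := fun j hj =>
    hE.spine.isVerticalPath.mem _ (Nat.zero_le _) (by omega)
  have hne : ∀ i j, i + 2 ≤ k - l → j ≤ k → c (i + κ.shift) ∉ E j := fun i j hi hj hij => by
    obtain rfl := hL.index_eq (by omega) hj (hc i hi) (hE.sub j hj hij)
    exact hE.notMem _ (by omega) hij
  refine .of_lt ?_ ⟨c κ.shift, by simp [withSpine, hE.eq_empty, ht]⟩ ?_ ?_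
  · rintro i j hij hj v (hvi | ⟨hi, rfl⟩) (hvj | ⟨hj', hvj⟩)
    · exact hij.ne (hL.index_eq (by omega) hj (hE.sub i (by omega) hvi) (hE.sub j hj hvj))
    · exact hne j i hj' (by omega) (hvj ▸ hvi)
    · exact hne i j hi hj hvj
    · have := hL.index_eq (by omega) (by omega) (hc i hi) (hvj ▸ hc j hj')
      omega
  · rintro j hj v (hv | ⟨hj', rfl⟩)
    · by_cases hva : Attached G k c κ (j + 1) v
      · exact ⟨_, Or.inr ⟨hva.2.1, rfl⟩, hva.adj_shift⟩
      · exact (hE.exists_parent j hj v hv hva).imp fun u hu => ⟨Or.inl hu.1, hu.2⟩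
    · refine ⟨_, Or.inr ⟨by omega, rfl⟩, ?_⟩
      rw [Nat.add_right_comm]
      exact hE.spine.isVerticalPath.adj _ (Nat.zero_le _) (by omega)
  · rintro i j hij hj u (hu | ⟨hi, rfl⟩) v (hv | ⟨hj', rfl⟩) huv
    · have := hL.le_succ hj (hE.sub i (by omega) hu) (hE.sub j hj hv) huv
      omega
    · have := hL.le_succ (by omega) (hE.sub i (by omega) hu) (hc j hj') huv
      omega
    · rcases hj.eq_or_lt with rfl | hj
      · have := hL.le_succ le_rfl (hc i hi) (hE.sub j le_rfl hv) huv
        omega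
      · have := hE.eq_of_adj_shift (by omega) hj hv huv
        omega
    · have := hL.le_succ (by omega) (hc i hi) (hc j hj') huv
      omega

theorem adj_of_adj (hE : IsBranching G k L c κ E) (hG : OddHolesLE G l) (hl : 1 ≤ l)
    (hik : i + 3 ≤ k) (hu : u ∈ E (i + 1)) (hv : v ∈ E (i + 1)) (huv : G.Adj u v) (hw : w ∈ E i)
    (hwu : G.Adj w u) : G.Adj w v := by
  by_cases hua : Attached G k c κ (i + 1) u
  · have hva := hE.attached_of_adj hG hl hik hu hv huv hua
    cases κ with
    | both r => exact absurd hwu (hE.not_adj_of_attached hG hw hu hua)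
    | _ => exact hE.adj_of_attached hG hl (by simp) hik hw hu hv huv hua hva hwu
  · refine hE.adj_of_not_attached hG hl hik hw hu hv huv hua (fun hva => hua ?_) hwu
    exact hE.attached_of_adj hG hl hik hv hu huv.symm hva

theorem not_adj_of_adj_spine (hE : IsBranching G k L c κ E) (hG : OddHolesLE G l)
    (hik : i + 1 < k) (hu : u ∈ E (i + 1)) (huc : G.Adj (c (i + 1)) u) (hκ : κ.shift = 0)
    (hw : w ∈ E i) : ¬ G.Adj w u := by
  have hua := hE.attached_of_adj_spine hik.le hik hu huc
  cases κ with
  | parent => exact absurd huc hua.2.2.2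
  | sibling => simp [Attachment.shift] at hκ
  | both r => exact hE.not_adj_of_attached hG hw hu hua

theorem hasUniformParents_withSpine (hE : IsBranching G k L c κ E) (hG : OddHolesLE G l)
    (hl : 1 ≤ l) (hn : n ≤ k - 2) : HasUniformParents G n (withSpine E c (k - l) κ.shift) := by
  have he := κ.shift_le
  have hshift : ∀ i v, i + 3 ≤ k - l → v ∈ E (i + 1) → G.Adj (c (i + 1 + κ.shift)) v →
      κ.shift = 0 := fun i v hi hv hadj => by
    have := hE.eq_of_adj_shift (by omega) (by omega) hv hadj
    omega
  refine .of_imp fun i hi u hu v hv huv w hw hwu => ?_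
  rcases hu with hu | ⟨hu, rfl⟩ <;> rcases hv with hv | ⟨hv, rfl⟩
  · rcases hw with hw | ⟨hw, rfl⟩
    · exact hE.adj_of_adj hG hl (by omega) hu hv huv hw hwu
    · exact (hE.attached_of_adj hG hl (by omega) hu hv huv
        (hE.attached_of_adj_spine (by omega) (by omega) hu hwu)).adj_shift
  · have hκ := hshift i u hv hu huv.symm
    simp only [hκ, Nat.add_zero] at huv hw ⊢
    rcases hw with hw | ⟨-, rfl⟩
    · exact absurd hwu (hE.not_adj_of_adj_spine hG (by omega) hu huv.symm hκ hw)
    · exact hE.spine.isVerticalPath.adj i (Nat.zero_le i) (by omega)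
  · have hκ := hshift i v hu hv huv
    rcases hw with hw | ⟨-, rfl⟩
    · simp only [hκ, Nat.add_zero] at hwu
      refine absurd hwu (hE.spine.not_adj_succ (Nat.zero_le i) (by omega)
        (hE.sub i (by omega) hw) ?_)
      exact (hE.spine_ne (by omega) (by omega) hw).symm
    · exact (hE.attached_of_adj_spine (by omega) (by omega) hv huv).adj_shift
  · exact absurd huv G.irrefl

theorem isUniformlyLevelled (hE : IsBranching G k L c κ E) (hG : OddHolesLE G l) (hl : 1 ≤ l)
    (hn : n ≤ k - 2) (hne : (E k).Nonempty) : IsUniformlyLevelled G k n (E k) := by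
  obtain ⟨z, hz⟩ := hne
  obtain ⟨s, -, x, -, hx⟩ := hE.exists_isBranch le_rfl hz
  have hs := hx.attached
  exact ⟨withSpine E c (k - l) κ.shift,
    hE.isLevelling_withSpine hl ((Nat.succ_le_succ hs.1).trans hs.2.1),
    hE.hasUniformParents_withSpine hG hl hn, Set.subset_union_left⟩

end IsBranching

theorem exists_attached (hj : 1 ≤ j) (hjk : j < k - l)
    (hadj : G.Adj (c (j - 1)) v ∨ G.Adj (c j) v) : ∃ κ : Attachment l, Attached G k c κ j v := by
  by_cases hp : G.Adj (c (j - 1)) v <;> by_cases hs : G.Adj (c j) v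
  · exact ⟨.both ⟨j % (l + 1), Nat.mod_lt _ l.succ_pos⟩, hj, hjk, hp, hs, rfl⟩
  · exact ⟨.parent, hj, hjk, hp, hs⟩
  · exact ⟨.sibling, hj, hjk, hp, hs⟩
  · exact absurd hadj (not_or_intro hp hs)

/-- The vertices reached by going down from the vertices attached in the way `κ`, avoiding the
neighbours of the spine `c` until the last level `k`. -/
def attachedGrowth (G : SimpleGraph V) (k : ℕ) (L : ℕ → Set V) (c : ℕ → V) (κ : Attachment l) :
    ℕ → Set V
  | 0 => ∅
  | j + 1 => {v ∈ L (j + 1) | (v ≠ c (j + 1) ∧ Attached G k c κ (j + 1) v) ∨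
      ((j + 1 < k → v ≠ c (j + 1) ∧ ¬ G.Adj (c (j + 1)) v ∧ ¬ G.Adj (c j) v) ∧
        ∃ u ∈ attachedGrowth G k L c κ j, G.Adj u v)}

theorem attachedGrowth_subset (κ : Attachment l) (j : ℕ) : attachedGrowth G k L c κ j ⊆ L j := by
  cases j with
  | zero => exact Set.empty_subset _
  | succ j => exact Set.sep_subset _ _

theorem notMem_attachedGrowth (hj : j < k) : c j ∉ attachedGrowth G k L c κ j := by
  cases j with
  | zero => exact Set.notMem_empty _
  | succ j =>
    rintro ⟨-, ⟨hne, -⟩ | ⟨hc, -⟩⟩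
    · exact hne rfl
    · exact (hc hj).1 rfl

theorem isUniformlyLevelled_attachedGrowth [Finite V] (hL : IsLevelling G k L)
    (hG : OddHolesLE G l) (hl : 1 ≤ l) (hC : (G.induce (L k)).Preconnected)
    (hc : IsDependentChain G L c 0 k) (hn : n ≤ k - 2) :
    IsUniformlyLevelled G k n (attachedGrowth G k L c κ k) := by
  rcases (attachedGrowth G k L c κ k).eq_empty_or_nonempty with hempty | hne
  · exact hempty ▸ hL.isUniformlyLevelled_empty
  obtain ⟨F, hF, hFk, hFpar, hFdep⟩ := exists_dependent_subsets (G := G) (k := k)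
    (E := attachedGrowth G k L c κ) (att := Attached G k c κ) fun j _ v hv hva =>
      (hv.2.resolve_left fun h => hva h.2).2
  have hE : IsBranching G k L c κ F :=
    { levelling := hL
      preconnected := hC
      spine := hc
      sub := fun j hj => (hF j hj).trans (attachedGrowth_subset κ j)
      notMem := fun j hj hcj => notMem_attachedGrowth hj (hF j hj.le hcj)
      eq_empty := Set.subset_empty_iff.1 (hF 0 k.zero_le)
      exists_parent := hFpar
      clean := by
        rintro (_ | j) hj v hv hva
        · exact (hF 0 k.zero_le hv).elim
        · exact (((hF _ hj.le hv).2.resolve_left fun h => hva h.2).1 hj).2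
      dep := hFdep }
  rw [← hFk] at hne ⊢
  exact hE.isUniformlyLevelled hG hl hn hne

end Branchings

section Stems

variable {G : SimpleGraph V} {k l : ℕ} {L : ℕ → Set V} {c d : ℕ → V} {e h j n : ℕ} {u v : V}

/-- The path `d 0, …, d (h - 1)`, followed by the vertices of the levels `L h, L (h + 1), …`
reached by going down from `d (h - 1)`, avoiding the neighbours of the path which are higher than
the parents. -/
def stemGrowth (G : SimpleGraph V) (L : ℕ → Set V) (d : ℕ → V) (h : ℕ) : ℕ → Set V
  | 0 => {d 0}
  | j + 1 => {v | if j + 1 < h then v = d (j + 1) else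
      v ∈ L (j + 1) ∧ (∃ u ∈ stemGrowth G L d h j, G.Adj u v) ∧ ∀ i < j, i < h → ¬ G.Adj (d i) v}

theorem mem_stemGrowth_of_lt (hj : j < h) : v ∈ stemGrowth G L d h j ↔ v = d j := by
  cases j with
  | zero => rfl
  | succ j => simp [stemGrowth, hj]

theorem mem_stemGrowth_succ (hj : h ≤ j + 1) : v ∈ stemGrowth G L d h (j + 1) ↔
    v ∈ L (j + 1) ∧ (∃ u ∈ stemGrowth G L d h j, G.Adj u v) ∧
      ∀ i < j, i < h → ¬ G.Adj (d i) v := by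
  rw [stemGrowth, Set.mem_ofPred_eq, if_neg hj.not_gt]

theorem stemGrowth_subset (hh : 1 ≤ h) (hj : h ≤ j) : stemGrowth G L d h j ⊆ L j := by
  obtain ⟨j, rfl⟩ : ∃ i, j = i + 1 := ⟨j - 1, by omega⟩
  exact fun v hv => ((mem_stemGrowth_succ hj).1 hv).1

theorem isLevelling_stemGrowth (hL : IsLevelling G k L) (hh : 1 ≤ h) (he : e ≤ 1)
    (hhk : h - 1 + e ≤ k) (hd : IsVerticalPath G (fun j => L (j + e)) d 0 (h - 1)) :
    IsLevelling G k (stemGrowth G L d h) := by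
  have hmem : ∀ j < h, d j ∈ L (j + e) := fun j hj => hd.mem j j.zero_le (by omega)
  refine .of_lt ?_ ⟨d 0, rfl⟩ ?_ ?_
  · intro i j hij hj v hvi hvj
    rcases lt_or_ge i h with hi | hi
    · obtain rfl := (mem_stemGrowth_of_lt hi).1 hvi
      rcases lt_or_ge j h with hjh | hjh
      · have := hL.index_eq (by omega) (by omega) (hmem i hi)
          ((mem_stemGrowth_of_lt hjh).1 hvj ▸ hmem j hjh)
        omega
      · have := hL.index_eq (by omega) hj (hmem i hi) (stemGrowth_subset hh hjh hvj)
        obtain rfl : j = i + 1 := by omega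
        obtain ⟨u, hu, huv⟩ := ((mem_stemGrowth_succ hjh).1 hvj).2.1
        exact huv.ne ((mem_stemGrowth_of_lt hi).1 hu)
    · exact hij.ne (hL.index_eq (by omega) hj (stemGrowth_subset hh hi hvi)
        (stemGrowth_subset hh (hi.trans hij.le) hvj))
  · intro j _ v hv
    rcases lt_or_ge (j + 1) h with hjh | hjh
    · obtain rfl := (mem_stemGrowth_of_lt hjh).1 hv
      exact ⟨d j, (mem_stemGrowth_of_lt (by omega)).2 rfl, hd.adj j j.zero_le (by omega)⟩
    · exact ((mem_stemGrowth_succ hjh).1 hv).2.1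
  · intro i j hij hj u hu v hv huv
    rcases lt_or_ge i h with hi | hi
    · obtain rfl := (mem_stemGrowth_of_lt hi).1 hu
      rcases lt_or_ge j h with hjh | hjh
      · obtain rfl := (mem_stemGrowth_of_lt hjh).1 hv
        have := hL.le_succ (by omega) (hmem i hi) (hmem j hjh) huv
        omega
      · obtain ⟨j, rfl⟩ : ∃ m, j = m + 1 := ⟨j - 1, by omega⟩
        exact ((mem_stemGrowth_succ hjh).1 hv).2.2 i (by omega) hi huv
    · have := hL.le_succ hj (stemGrowth_subset hh hi hu) (stemGrowth_subset hh (by omega) hv) huv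
      omega

theorem hasUniformParents_stemGrowth (hn : n ≤ h) :
    HasUniformParents G n (stemGrowth G L d h) := by
  refine .of_imp fun i hi u hu v hv huv w hw hwu => ?_
  obtain rfl := (mem_stemGrowth_of_lt (by omega)).1 hw
  rcases lt_or_ge (i + 1) h with hih | hih
  · exact absurd (((mem_stemGrowth_of_lt hih).1 hu).trans ((mem_stemGrowth_of_lt hih).1 hv).symm)
      huv.ne
  · obtain ⟨w, hw, hwv⟩ := ((mem_stemGrowth_succ hih).1 hv).2.1
    rwa [(mem_stemGrowth_of_lt (by omega)).1 hw] at hwv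

theorem isUniformlyLevelled_stemGrowth (hL : IsLevelling G k L) (hh : 1 ≤ h) (he : e ≤ 1)
    (hhk : h - 1 + e ≤ k) (hd : IsVerticalPath G (fun j => L (j + e)) d 0 (h - 1)) (hn : n ≤ h) :
    IsUniformlyLevelled G k n (stemGrowth G L d h k) :=
  ⟨_, isLevelling_stemGrowth hL hh he hhk hd, hasUniformParents_stemGrowth hn, subset_rfl⟩

theorem mem_stemGrowth_of_adj (hL : IsLevelling G k L) (hc : IsVerticalPath G L c 0 k)
    (hhj : h ≤ j + 1) (hj : j + 1 ≤ k) (hv : v ∈ L (j + 1)) (hu : u ∈ stemGrowth G L c h j)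
    (huv : G.Adj u v) : v ∈ stemGrowth G L c h (j + 1) := by
  refine (mem_stemGrowth_succ hhj).2 ⟨hv, ⟨u, hu, huv⟩, fun i hij _ hadj => ?_⟩
  have := hL.le_succ hj (hc.mem i i.zero_le (by omega)) hv hadj
  omega

theorem mem_stemGrowth_self (hL : IsLevelling G k L) (hc : IsVerticalPath G L c 0 k)
    (hj : j ≤ k) : c j ∈ stemGrowth G L c h j := by
  induction j with
  | zero => rfl
  | succ j ih =>
    rcases lt_or_ge (j + 1) h with hjh | hjh
    · exact (mem_stemGrowth_of_lt hjh).2 rfl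
    · exact mem_stemGrowth_of_adj hL hc hjh hj (hc.mem _ (j + 1).zero_le hj) (ih (by omega))
        (hc.adj j j.zero_le hj)

theorem mem_stemGrowth_shift (hL : IsLevelling G k L) (hc : IsVerticalPath G L c 0 k)
    (hhj : h ≤ j + 1) (hj : j + 1 ≤ k) (hv : v ∈ L (j + 1)) (hcv : ¬ G.Adj (c j) v)
    (hu : u ∈ stemGrowth G L (fun i => c (i + 1)) h j) (huv : G.Adj u v) :
    v ∈ stemGrowth G L (fun i => c (i + 1)) h (j + 1) := by
  refine (mem_stemGrowth_succ hhj).2 ⟨hv, ⟨u, hu, huv⟩, fun i hij _ hadj => ?_⟩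
  have := hL.le_succ hj (hc.mem (i + 1) (i + 1).zero_le (by omega)) hv hadj
  obtain rfl : j = i + 1 := by omega
  exact hcv hadj

theorem mem_growth (hL : IsLevelling G k L) (hc : IsVerticalPath G L c 0 k) (ht : 1 ≤ k - l)
    (hj : j ≤ k) (hv : v ∈ L j) :
    (j < k ∧ v = c j) ∨ (k - l ≤ j ∧ v ∈ stemGrowth G L c (k - l) j) ∨
      (∃ h, k - l ≤ h ∧ h ≤ j ∧ h < k ∧ v ∈ stemGrowth G L (fun i => c (i + 1)) h j) ∨
      ∃ κ : Attachment l, v ∈ attachedGrowth G k L c κ j := by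
  induction j generalizing v with
  | zero =>
    obtain ⟨x, hx⟩ := hL.2.1
    have hc0 := hc.mem 0 le_rfl k.zero_le
    rw [hx] at hv hc0
    exact Or.inl ⟨by omega, hv.trans hc0.symm⟩
  | succ j ih =>
    by_cases hvc : j + 1 < k ∧ v = c (j + 1)
    · exact Or.inl hvc
    refine Or.inr ?_
    by_cases hup : G.Adj (c j) v
    · by_cases htj : k - l ≤ j + 1
      · exact Or.inl ⟨htj, mem_stemGrowth_of_adj hL hc htj hj hv
          (mem_stemGrowth_self hL hc (by omega)) hup⟩
      · obtain ⟨κ, hκ⟩ := exists_attached (v := v) (G := G) (c := c) j.succ_pos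
          (not_le.1 htj) (Or.inl hup)
        exact Or.inr (Or.inr ⟨κ, hv, Or.inl ⟨fun h => hvc ⟨by omega, h⟩, hκ⟩⟩)
    by_cases hside : j + 1 < k ∧ G.Adj (c (j + 1)) v
    · by_cases htj : k - l ≤ j + 1
      · exact Or.inr (Or.inl ⟨j + 1, htj, le_rfl, hside.1, mem_stemGrowth_shift hL hc le_rfl hj hv
          hup ((mem_stemGrowth_of_lt j.lt_succ_self).2 rfl) hside.2⟩)
      · obtain ⟨κ, hκ⟩ := exists_attached (v := v) (G := G) (c := c) j.succ_pos
          (not_le.1 htj) (Or.inr hside.2)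
        exact Or.inr (Or.inr ⟨κ, hv, Or.inl ⟨fun h => hvc ⟨hside.1, h⟩, hκ⟩⟩)
    obtain ⟨u, hu, huv⟩ := hL.exists_parent hj hv
    rcases ih (by omega) hu with ⟨-, rfl⟩ | ⟨htj, hu⟩ | ⟨h, hth, hhj, hhk, hu⟩ | ⟨κ, hu⟩
    · exact absurd huv hup
    · exact Or.inl ⟨by omega, mem_stemGrowth_of_adj hL hc (by omega) hj hv hu huv⟩
    · exact Or.inr (Or.inl ⟨h, hth, by omega, hhk,
        mem_stemGrowth_shift hL hc (by omega) hj hv hup hu huv⟩)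
    · exact Or.inr (Or.inr ⟨κ, hv, Or.inr ⟨fun hjk => ⟨fun h => hvc ⟨hjk, h⟩,
        fun h => hside ⟨hjk, h⟩, hup⟩, u, hu, huv⟩⟩)

end Stems

section Covers

variable {G : SimpleGraph V} {X : Set V} {N : ℕ}

theorem colorable_induce_of_iUnion {ι : Type*} [Fintype ι] {A : ι → Set V}
    (hA : ∀ i, (G.induce (A i)).Colorable N) (hX : X ⊆ ⋃ i, A i) :
    (G.induce X).Colorable (Fintype.card ι * N) := by
  choose f hf using fun v : X => Set.mem_iUnion.1 (hX v.2)
  have C := fun i => (hA i).some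
  let D : (G.induce X).Coloring (ι × Fin N) := Coloring.mk (fun v => (f v, C (f v) ⟨v, hf v⟩)) <| by
    rintro u v huv heq
    obtain ⟨hfuv, hcol⟩ := Prod.mk.injEq .. ▸ heq
    have hv : ∀ i (hi : (v : V) ∈ A i), f u = i → C i ⟨v, hi⟩ = C (f u) ⟨v, hfuv ▸ hf v⟩ := by
      rintro _ _ rfl
      rfl
    rw [hv _ (hf v) hfuv] at hcol
    exact (C (f u)).valid (v := ⟨u, hf u⟩) (w := ⟨v, hfuv ▸ hf v⟩) huv hcol
  simpa using D.colorable

theorem colorable_induce_of_preconnected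
    (h : ∀ Y ⊆ X, Y.Nonempty → (G.induce Y).Preconnected → (G.induce Y).Colorable N) :
    (G.induce X).Colorable N := by
  rw [colorable_iff_forall_connectedComponent]
  intro K
  let f : K.toSimpleGraph →g G.induce (Subtype.val '' K.supp) :=
    ⟨fun v => ⟨v.1, v.1, v.2, rfl⟩, id⟩
  have hf : Function.Surjective f := by
    rintro ⟨_, v, hv, rfl⟩
    exact ⟨⟨v, hv⟩, rfl⟩
  refine (h _ ?_ (K.nonempty_supp.image _) ?_).of_hom f
  · rintro _ ⟨v, -, rfl⟩
    exact v.2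
  · exact K.connected_toSimpleGraph.preconnected.map f hf

end Covers

/-- The attachments encoded in a type with `l + 3` elements, for counting them. -/
def Attachment.equivOption (l : ℕ) : Attachment l ≃ Option (Option (Fin (l + 1))) where
  toFun
    | parent => none
    | sibling => some none
    | both r => some (some r)
  invFun
    | none => parent
    | some none => sibling
    | some (some r) => both r
  left_inv κ := by cases κ <;> rfl
  right_inv o := by rcases o with _ | _ | r <;> rfl

instance (l : ℕ) : Fintype (Attachment l) :=
  Fintype.ofEquiv _ (Attachment.equivOption l).symm

theorem Attachment.card (l : ℕ) : Fintype.card (Attachment l) = l + 3 := by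
  simp [Fintype.card_congr (Attachment.equivOption l)]

namespace IsLevelling

variable {G : SimpleGraph V} {L : ℕ → Set V} {X T : Set V} {p q : V} {a b i k l m n N : ℕ}

theorem update_last (hL : IsLevelling G k L) (hk : 1 ≤ k) (hX : X ⊆ L k) :
    IsLevelling G k (Function.update L k X) := by
  have hsub : ∀ j, Function.update L k X j ⊆ L j := by
    intro j
    rcases eq_or_ne j k with rfl | hj
    · simpa using hX
    · simp [hj]
  refine hL.of_subset (fun j _ => hsub j) ?_ fun j hj v hv => ?_
  · simpa [(show 0 ≠ k by omega)] using hL.2.1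
  · simpa [hj.ne] using hL.exists_parent hj (hsub _ hv)

theorem exists_spine [Finite V] (hL : IsLevelling G k L) (hne : (L k).Nonempty) :
    ∃ M c, IsLevelling G k M ∧ M k = L k ∧ IsDependentChain G M c 0 k := by
  obtain ⟨F, hF, hFk, hFpar, hFdep⟩ := exists_dependent_subsets (G := G) (k := k) (E := L)
    (att := fun _ _ => False) fun j hj v hv _ => hL.exists_parent hj hv
  have hFne : ∀ j ≤ k, (F j).Nonempty := by
    intro j hj
    induction hj using Nat.decreasingInduction with
    | self => rwa [hFk]
    | of_succ j hj ih =>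
      obtain ⟨v, hv⟩ := ih
      exact (hFpar j hj v hv id).imp fun u hu => hu.1
  obtain ⟨x, hx⟩ := hL.2.1
  have hFx : F 0 = {x} := (hFne 0 k.zero_le).subset_singleton_iff.1 (hx ▸ hF 0 k.zero_le)
  obtain ⟨c, hc, -⟩ := exists_dependentChain (att := fun _ _ => False) hFdep k.zero_le
    (hFne 0 k.zero_le).some_mem
  exact ⟨F, c, hL.of_subset hF ⟨x, hFx⟩ fun j hj v hv => hFpar j hj v hv id, hFk, hc⟩

theorem exists_uniformlyLevelled_cover [Finite V] (hL : IsLevelling G k L) (hG : OddHolesLE G l)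
    (hl : 1 ≤ l) (hlk : l < k) (hn : n ≤ k - l) (hn' : n ≤ k - 2)
    (hC : (G.induce (L k)).Preconnected) (hne : (L k).Nonempty) :
    ∃ A : Unit ⊕ Fin l ⊕ Attachment l → Set V,
      (∀ i, IsUniformlyLevelled G k n (A i)) ∧ L k ⊆ ⋃ i, A i := by
  obtain ⟨M, c, hM, hMk, hc⟩ := hL.exists_spine hne
  have hcM := hc.isVerticalPath
  rw [← hMk] at hC ⊢
  refine ⟨Sum.elim (fun _ => stemGrowth G M c (k - l) k) (Sum.elim
    (fun h => stemGrowth G M (fun i => c (i + 1)) (k - l + h) k)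
    (fun κ => attachedGrowth G k M c κ k)), ?_, fun v hv => Set.mem_iUnion.2 ?_⟩
  · rintro (_ | h | κ)
    · exact isUniformlyLevelled_stemGrowth hM (by omega) zero_le_one (by omega)
        (hcM.mono le_rfl (by omega)) hn
    · refine isUniformlyLevelled_stemGrowth hM (by omega) le_rfl (by omega) ⟨?_, ?_⟩ (by omega)
      · exact fun j _ hj => hcM.mem (j + 1) (j + 1).zero_le (by omega)
      · exact fun j _ hj => hcM.adj (j + 1) (j + 1).zero_le (by omega)
    · exact isUniformlyLevelled_attachedGrowth hM hG hl hC hc hn'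
  · rcases mem_growth (l := l) hM hcM (by omega) le_rfl hv with
      ⟨hk, -⟩ | ⟨-, hv⟩ | ⟨h, hth, -, hhk, hv⟩ | ⟨κ, hv⟩
    · exact absurd hk (lt_irrefl k)
    · exact ⟨.inl (), hv⟩
    · refine ⟨.inr (.inl ⟨h - (k - l), by omega⟩), ?_⟩
      simpa [Nat.add_sub_cancel' hth] using hv
    · exact ⟨.inr (.inr κ), hv⟩

theorem colorable_of_isUniformlyLevelled [Finite V] (hL : IsLevelling G k L)
    (hG : OddHolesLE G l) (hl : 1 ≤ l) (hlk : l < k) (hn : n ≤ k - l) (hn' : n ≤ k - 2)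
    (hN : ∀ A, IsUniformlyLevelled G k n A → (G.induce A).Colorable N) :
    (G.induce (L k)).Colorable ((3 * l + 3) * N) := by
  refine colorable_induce_of_preconnected fun X hX hne hC => ?_
  obtain ⟨A, hA, hXA⟩ := (hL.update_last (by omega) hX).exists_uniformlyLevelled_cover hG hl hlk
    hn hn' (by rwa [Function.update_self]) (by rwa [Function.update_self])
  rw [Function.update_self] at hXA
  refine (colorable_induce_of_iUnion (fun i => hN _ (hA i)) hXA).mono (Nat.mul_le_mul_right N ?_)
  simp only [Fintype.card_sum, Fintype.card_unit, Fintype.card_fin, Attachment.card]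
  omega

theorem exists_max_chromaticNumber [Finite V] (hL : IsLevelling G k L) (n : ℕ) :
    ∃ (M : ℕ → Set V) (N : ℕ), IsLevelling G k M ∧ HasUniformParents G n M ∧
      (G.induce (M k)).chromaticNumber = N ∧
        ∀ A, IsUniformlyLevelled G k n A → (G.induce A).Colorable N := by
  obtain ⟨B, ⟨M, hM, hMn, hBM⟩, hB⟩ := Set.exists_max_image {A | IsUniformlyLevelled G k n A}
    (fun A => (G.induce A).chromaticNumber) (Set.toFinite _) ⟨∅, hL.isUniformlyLevelled_empty⟩
  have := Fintype.ofFinite (M k)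
  obtain ⟨N, hN⟩ := ENat.ne_top_iff_exists.1
    (chromaticNumber_ne_top_iff_exists.2 ⟨_, (G.induce (M k)).colorable_of_fintype⟩)
  refine ⟨M, N, hM, hMn, hN.symm, fun A hA => chromaticNumber_le_iff_colorable.1 ?_⟩
  exact hN ▸ (hB A hA).trans (chromaticNumber_mono_of_hom (G.induceHomOfLE hBM).toHom)

theorem preconnected_lowerLevels (hL : IsLevelling G k L) (hi : i ≤ k + 1) :
    (G.induce (lowerLevels L i)).Preconnected := by
  obtain ⟨x, hx⟩ := hL.2.1
  have reachable_root : ∀ j (hj : j < i) v (hv : v ∈ L j),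
      (G.induce (lowerLevels L i)).Reachable ⟨v, mem_lowerLevels.2 ⟨j, hj, hv⟩⟩
        ⟨x, mem_lowerLevels.2 ⟨0, by omega, hx ▸ rfl⟩⟩ := by
    intro j
    induction j with
    | zero =>
      intro hj v hv
      rw [hx] at hv
      obtain rfl : v = x := hv
      exact Reachable.refl _
    | succ j ih =>
      intro hj v hv
      obtain ⟨u, hu, huv⟩ := hL.exists_parent (by omega) hv
      have hvu : (G.induce (lowerLevels L i)).Adj ⟨v, mem_lowerLevels.2 ⟨j + 1, hj, hv⟩⟩
        ⟨u, mem_lowerLevels.2 ⟨j, by omega, hu⟩⟩ := huv.symm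
      exact hvu.reachable.trans (ih (by omega) u hu)
  rintro ⟨u, hu⟩ ⟨v, hv⟩
  obtain ⟨j, hj, huj⟩ := mem_lowerLevels.1 hu
  obtain ⟨j', hj', hvj⟩ := mem_lowerLevels.1 hv
  exact (reachable_root j hj u huj).trans (reachable_root j' hj' v hvj).symm

theorem even_of_no_horizontal (hL : IsLevelling G k L) (hi : i ≤ k + 1)
    (hindep : ∀ j < i, G.IsIndepSet (L j)) (hT : IsInducedPathOn G T p q m)
    (hTi : T ⊆ lowerLevels L i) (ha : a < i) (hb : b < i) (hp : p ∈ L a) (hq : q ∈ L b) :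
    Even (m + a + b) := by
  rw [Nat.even_iff]
  induction hT generalizing a with
  | single v =>
    obtain rfl := hL.index_eq (by omega) (by omega) hp hq
    omega
  | @cons S u v w m hS huv _ _ ih =>
    obtain ⟨j, hj, hv⟩ := mem_lowerLevels.1 (hTi (Or.inr hS.left_mem))
    have hpar := ih (fun z hz => hTi (Or.inr hz)) hj hv hq
    have hne : a ≠ j := by
      rintro rfl
      exact hindep a ha hp hv huv.ne huv
    have := hL.adj_cases (by omega) (by omega) hp hv huv
    omega

theorem isIndepSet (hL : IsLevelling G k L) (hG : OddHolesLE G 0) (hi : i ≤ k) :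
    G.IsIndepSet (L i) := by
  induction i using Nat.strong_induction_on with
  | _ i ih =>
    intro u hu v hv huv hadj
    obtain _ | i := i
    · obtain ⟨x, hx⟩ := hL.2.1
      rw [hx] at hu hv
      exact huv (hu.trans hv.symm)
    obtain ⟨a, ha, hau⟩ := hL.exists_parent hi hu
    obtain ⟨b, hb, hbv⟩ := hL.exists_parent hi hv
    obtain ⟨T, hT, p, q, m, hpath, hup, hvq, hup', hvq'⟩ :=
      IsInducedPathOn.exists_between (hL.preconnected_lowerLevels (i := i + 1) (by omega))
        ⟨a, mem_lowerLevels.2 ⟨i, i.lt_succ_self, ha⟩, hau.symm⟩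
        ⟨b, mem_lowerLevels.2 ⟨i, i.lt_succ_self, hb⟩, hbv.symm⟩
    have mem_of_adj : ∀ z ∈ T, ∀ w ∈ L (i + 1), G.Adj w z → z ∈ L i := by
      intro z hz w hw hwz
      obtain ⟨j, hj, hzj⟩ := mem_lowerLevels.1 (hT hz)
      have := hL.le_succ hi hzj hw hwz.symm
      rwa [show i = j by omega]
    have hpar := hL.even_of_no_horizontal (i := i + 1) (by omega)
      (fun j hj => ih j hj (by omega)) hpath hT i.lt_succ_self i.lt_succ_self
      (mem_of_adj p hpath.left_mem u hu hup) (mem_of_adj q hpath.right_mem v hv hvq)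
    have hedge : IsInducedPathOn G {u, v} u v 1 :=
      .cons (.single v) hadj huv fun z hz _ => hz
    rw [Nat.even_iff] at hpar
    refine hG.not_odd hedge hpath le_rfl hup.symm hvq.symm ?_ ?_ (by omega)
      (Nat.odd_iff.2 (by omega))
    · intro z hz z' hz' heq
      obtain ⟨j, hj, hzj⟩ := mem_lowerLevels.1 (hT (heq ▸ hz'))
      have hzi : z ∈ L (i + 1) := hz.elim (fun h => h ▸ hu) fun h => Set.mem_singleton_iff.1 h ▸ hv
      exact hj.ne (hL.index_eq (by omega) hi hzj hzi)
    · rintro z (rfl | rfl) w hw hwz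
      · exact Or.inl ⟨rfl, hup' w hw hwz.symm⟩
      · exact Or.inr ⟨rfl, hvq' w hw hwz.symm⟩

end IsLevelling

theorem stmt8 [Fintype V] (G : SimpleGraph V) (l k : ℕ) (L : ℕ → Set V)
    (hhole : ∀ (v : V) (p : G.Walk v v), p.IsCycle → IsInducedWalk G p →
       Odd p.length → p.length ≤ 2 * l + 1)
    (hlev : IsLevelling G k L) :
    ∃ M : ℕ → Set V, IsLevelling G k M ∧
      (G.induce (L k)).chromaticNumber ≤
        ((3 * l + 3 : ℕ) : ℕ∞) * (G.induce (M k)).chromaticNumber ∧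
      ∀ i, 1 ≤ i → i ≤ k - max 2 l → ∀ u ∈ M i, ∀ v ∈ M i, G.Adj u v →
        ∀ w ∈ M (i - 1), (G.Adj w u ↔ G.Adj w v) := by
  have hle : (G.induce (L k)).chromaticNumber ≤
      ((3 * l + 3 : ℕ) : ℕ∞) * (G.induce (L k)).chromaticNumber :=
    le_mul_of_one_le_left' (by exact_mod_cast (show 1 ≤ 3 * l + 3 by omega))
  rcases Nat.eq_zero_or_pos l with rfl | hl
  · exact ⟨L, hlev, hle, fun i _ hi u hu v hv huv =>
      absurd huv (hlev.isIndepSet hhole (by omega) hu hv huv.ne)⟩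
  by_cases hk : k ≤ max 2 l
  · exact ⟨L, hlev, hle, fun i _ _ => by omega⟩
  obtain ⟨M, N, hM, hMn, hN, hcol⟩ := hlev.exists_max_chromaticNumber (k - max 2 l)
  refine ⟨M, hM, ?_, hMn⟩
  rw [hN]
  exact_mod_cast chromaticNumber_le_iff_colorable.2 <|
    hlev.colorable_of_isUniformlyLevelled hhole hl (by omega) (by omega) (by omega) hcol
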